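/- There exists a universal constant c > 0 such that the following holds. For every n ≥ 1, every γ ∈ (0,1], and every amplitude vector f with characteristic distribution p and Weyl distribution q, if ∑_{x ∈ 𝔽₂^{2n}} q(x) · 2ⁿ · p(x) ≥ γ (i.e., the average of |⟨ψ|W_x|ψ⟩|² for x drawn from the Weyl distribution is at least γ), then there exists a Lagrangian subspace L ⊆ 𝔽₂^{2n} such that ∑_{x ∈ L} p(x) ≥ c·γ^{1089}. (The quantity ∑_{x ∈ L} p(x) is a lower bound on the squared fidelity of the state with some stabilizer state.) -/

import Mathlib

open Finset

/-- The characteristic distribution of an amplitude vector `f : 𝔽₂ⁿ → ℂ`. -/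
noncomputable def charDist (n : ℕ) (f : (Fin n → ZMod 2) → ℂ) :
    (Fin n → ZMod 2) × (Fin n → ZMod 2) → ℝ :=
  fun x =>
    ((2 : ℝ) ^ n)⁻¹ *
      ‖∑ y : Fin n → ZMod 2,
          f y * (starRingEnd ℂ) (f (y + x.1)) *
            (-1 : ℂ) ^ (∑ i, x.2 i * y i : ZMod 2).val‖ ^ 2

/-- The Weyl distribution `q(x) = ∑_y p(y)·p(x+y)`. -/
noncomputable def weylDist (n : ℕ) (f : (Fin n → ZMod 2) → ℂ) :
    (Fin n → ZMod 2) × (Fin n → ZMod 2) → ℝ :=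
  fun x => ∑ y : (Fin n → ZMod 2) × (Fin n → ZMod 2), charDist n f y * charDist n f (x + y)

/-- The symplectic product on `𝔽₂^{2n}`: `[x,y] = ⟨x₁,y₂⟩ + ⟨x₂,y₁⟩`. -/
def sympl (n : ℕ) (x y : (Fin n → ZMod 2) × (Fin n → ZMod 2)) : ZMod 2 :=
  (∑ i, x.1 i * y.2 i) + (∑ i, x.2 i * y.1 i)

/-- A Lagrangian subspace of `𝔽₂^{2n}`. -/
def IsLagrangian (n : ℕ)
    (L : Submodule (ZMod 2) ((Fin n → ZMod 2) × (Fin n → ZMod 2))) : Prop :=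
  Module.finrank (ZMod 2) L = n ∧ ∀ x ∈ L, ∀ y ∈ L, sympl n x y = 0

/-!
Write `p` for the characteristic distribution and `K = 2 ^ n`. The hypothesis says that the mass
`T` of the additive triples of `p`, the sum of `p x * p y * p (x + y)`, satisfies `γ ≤ K * T`, while
`p ≤ 1 / K`. So `p` is nearly uniform on an approximate group of about `K` elements. A
Balog-Szemerédi-Gowers argument extracts from `p` a probability vector of small entropic doubling,
and the entropic form of Marton's conjecture in characteristic `2` (Gowers, Green, Manners and Tao)
then yields a coset of a subgroup `V` on which `p` has mass polynomial in `γ`.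

Two facts about `p` turn this coset into a Lagrangian subspace. Up to scaling, `p` is its own
symplectic Fourier transform; as `p` is nonnegative, its mass on a coset of `V` is at most that on
`V`, and densities increase when passing to a subspace. And since the Weyl operators anticommute
along nonorthogonal pairs, `K * p V` is at most the cardinality of some isotropic `I ≤ V`. Hence
`p I` is at least `K * (p V) ^ 2 / #V`, and `I` extends to a Lagrangian subspace.
-/

noncomputable section

open scoped Classical

section Laws

variable {Ω Ω' α β γ : Type*} [Fintype Ω'] [Fintype Ω]

/-- The law of the random variable `X` on the finite space `Ω` weighted by `μ`. -/
def law (μ : Ω → ℝ) (X : Ω → α) (s : α) : ℝ := ∑ ω with X ω = s, μ ω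

/-- The product of two weights. -/
def prodDist (μ : Ω → ℝ) (ν : Ω' → ℝ) (ω : Ω × Ω') : ℝ := μ ω.1 * ν ω.2

theorem law_eq_sum_ite (μ : Ω → ℝ) (X : Ω → α) (s : α) :
    law μ X s = ∑ ω, if X ω = s then μ ω else 0 :=
  sum_filter _ _

theorem law_id (μ : Ω → ℝ) : law μ (fun ω => ω) = μ := by
  funext s
  simp [law, sum_filter]

theorem law_apply_of_injective (μ : Ω → ℝ) (X : Ω → α) {e : α → β} (he : e.Injective) (s : α) :
    law μ (fun ω => e (X ω)) (e s) = law μ X s := by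
  simp only [law, he.eq_iff]

theorem law_nonneg {μ : Ω → ℝ} (hμ : μ ∈ stdSimplex ℝ Ω) (X : Ω → α) (s : α) : 0 ≤ law μ X s :=
  sum_nonneg fun ω _ => hμ.1 ω

theorem sum_law_mul [Fintype α] (μ : Ω → ℝ) (X : Ω → α) (F : α → ℝ) :
    ∑ s, law μ X s * F s = ∑ ω, μ ω * F (X ω) := by
  rw [← sum_fiberwise univ X]
  refine sum_congr rfl fun s _ => ?_
  rw [law, sum_mul]
  exact sum_congr rfl fun ω hω => by rw [(mem_filter.mp hω).2]

theorem law_law [Fintype α] (μ : Ω → ℝ) (X : Ω → α) (g : α → β) :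
    law (law μ X) g = law μ fun ω => g (X ω) := by
  funext t
  simpa [law_eq_sum_ite] using sum_law_mul μ X fun s => if g s = t then 1 else 0

theorem law_congr {μ : Ω → ℝ} {X Y : Ω → α} (h : ∀ ω, μ ω ≠ 0 → X ω = Y ω) :
    law μ X = law μ Y := by
  funext s
  rw [law_eq_sum_ite, law_eq_sum_ite]
  refine sum_congr rfl fun ω _ => ?_
  rcases eq_or_ne (μ ω) 0 with hω | hω
  · simp only [hω, ite_self]
  · rw [h ω hω]

theorem law_mem_stdSimplex [Fintype α] {μ : Ω → ℝ} (hμ : μ ∈ stdSimplex ℝ Ω) (X : Ω → α) :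
    law μ X ∈ stdSimplex ℝ α := by
  refine ⟨law_nonneg hμ X, ?_⟩
  simpa [hμ.2] using sum_law_mul μ X fun _ => 1

theorem le_law_apply {μ : Ω → ℝ} (hμ : μ ∈ stdSimplex ℝ Ω) (X : Ω → α) (ω : Ω) :
    μ ω ≤ law μ X (X ω) :=
  single_le_sum (fun ω _ => hμ.1 ω) (by simp)

theorem law_apply_ne_zero {μ : Ω → ℝ} (hμ : μ ∈ stdSimplex ℝ Ω) (X : Ω → α) {ω : Ω}
    (hω : μ ω ≠ 0) : law μ X (X ω) ≠ 0 :=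
  (((hμ.1 ω).lt_of_ne' hω).trans_le (le_law_apply hμ X ω)).ne'

theorem exists_of_law_apply_ne_zero {μ : Ω → ℝ} {X : Ω → α} {s : α} (hs : law μ X s ≠ 0) :
    ∃ ω, μ ω ≠ 0 ∧ X ω = s := by
  obtain ⟨ω, hω, hμω⟩ := exists_ne_zero_of_sum_ne_zero hs
  exact ⟨ω, hμω, (mem_filter.mp hω).2⟩

theorem exists_le_of_le_sum_mul [Fintype α] {r : α → ℝ} (hr : r ∈ stdSimplex ℝ α) {F : α → ℝ}
    {A : ℝ} (hA : A ≤ ∑ s, r s * F s) : ∃ s, 0 < r s ∧ A ≤ F s := by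
  by_contra! hlt
  obtain ⟨s, -, hs⟩ := exists_ne_zero_of_sum_ne_zero (hr.2.trans_ne one_ne_zero)
  have hsum : ∑ s, r s * F s < ∑ s, r s * A := by
    refine sum_lt_sum (fun s _ => ?_) ⟨s, mem_univ s, ?_⟩
    · rcases (hr.1 s).eq_or_lt with h | h
      · rw [← h, zero_mul, zero_mul]
      · exact (mul_lt_mul_of_pos_left (hlt s h) h).le
    · have h := (hr.1 s).lt_of_ne' hs
      exact mul_lt_mul_of_pos_left (hlt s h) h
  rw [← sum_mul, hr.2, one_mul] at hsum
  exact hA.not_gt hsum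

theorem prodDist_mem_stdSimplex {μ : Ω → ℝ} {ν : Ω' → ℝ} (hμ : μ ∈ stdSimplex ℝ Ω)
    (hν : ν ∈ stdSimplex ℝ Ω') : prodDist μ ν ∈ stdSimplex ℝ (Ω × Ω') := by
  refine ⟨fun ω => mul_nonneg (hμ.1 _) (hν.1 _), ?_⟩
  simp only [prodDist, Fintype.sum_prod_type, ← mul_sum, hν.2, mul_one, hμ.2]

theorem law_prodDist (μ : Ω → ℝ) (ν : Ω' → ℝ) (X : Ω → α) (Y : Ω' → β) :
    law (prodDist μ ν) (fun ω => (X ω.1, Y ω.2)) = prodDist (law μ X) (law ν Y) := by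
  funext s
  simp only [law_eq_sum_ite, prodDist, sum_mul_sum, Fintype.sum_prod_type, Prod.ext_iff, ite_and,
    mul_ite, ite_mul, mul_zero, zero_mul]
  exact sum_congr rfl fun _ _ => sum_congr rfl fun _ _ => by split_ifs <;> rfl

theorem law_prodDist_fst (μ : Ω → ℝ) {ν : Ω' → ℝ} (hν : ν ∈ stdSimplex ℝ Ω') (X : Ω → α) :
    law (prodDist μ ν) (fun ω => X ω.1) = law μ X := by
  funext s
  simp only [law_eq_sum_ite, prodDist, Fintype.sum_prod_type]
  refine sum_congr rfl fun ω _ => ?_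
  split_ifs <;> simp [← mul_sum, hν.2]

theorem law_prodDist_snd {μ : Ω → ℝ} (hμ : μ ∈ stdSimplex ℝ Ω) (ν : Ω' → ℝ) (Y : Ω' → β) :
    law (prodDist μ ν) (fun ω => Y ω.2) = law ν Y := by
  funext s
  simp only [law_eq_sum_ite, prodDist, Fintype.sum_prod_type_right]
  refine sum_congr rfl fun ω _ => ?_
  split_ifs <;> simp [← sum_mul, hμ.2]

/-- The weight `μ` conditioned on the event `C = c`, as a weight on the same space. It is `0` when
that event has weight `0`. -/
def condDist (μ : Ω → ℝ) (C : Ω → γ) (c : γ) (ω : Ω) : ℝ :=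
  if C ω = c then μ ω / law μ C c else 0

theorem condDist_mem_stdSimplex {μ : Ω → ℝ} (hμ : μ ∈ stdSimplex ℝ Ω) (C : Ω → γ) {c : γ}
    (hc : law μ C c ≠ 0) : condDist μ C c ∈ stdSimplex ℝ Ω := by
  constructor
  · intro ω
    unfold condDist
    split_ifs
    exacts [div_nonneg (hμ.1 ω) (law_nonneg hμ C c), le_rfl]
  · simp only [condDist, ← sum_filter, ← sum_div]
    exact div_self hc

theorem law_mul_law_condDist {μ : Ω → ℝ} (hμ : μ ∈ stdSimplex ℝ Ω) (C : Ω → γ) (X : Ω → α)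
    (c : γ) (s : α) :
    law μ C c * law (condDist μ C c) X s = law μ (fun ω => (X ω, C ω)) (s, c) := by
  simp only [law_eq_sum_ite _ X, law_eq_sum_ite _ (fun ω => (X ω, C ω)), mul_sum]
  refine sum_congr rfl fun ω _ => ?_
  by_cases hC : C ω = c
  · have hω : law μ C c = 0 → μ ω = 0 := fun h => by
      by_contra h'
      exact law_apply_ne_zero hμ C h' (hC ▸ h)
    by_cases hc : law μ C c = 0
    · simp [hω hc, hc]
    · simp [condDist, hC, mul_div_cancel₀ _ hc]
  · simp [condDist, hC]

end Laws

section Entropy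

variable {Ω α β γ : Type*} [Fintype Ω] [Fintype α] [Fintype β] [Fintype γ]

/-- The Shannon entropy, in nats, of a weight on a finite type. -/
def entropy (p : α → ℝ) : ℝ := ∑ s, Real.negMulLog (p s)

/-- The entropy `H[X]` of a random variable. -/
def entropyOf (μ : Ω → ℝ) (X : Ω → α) : ℝ := entropy (law μ X)

/-- The conditional entropy `H[X | Z]`. -/
def condEntropy (μ : Ω → ℝ) (X : Ω → α) (Z : Ω → γ) : ℝ :=
  entropyOf μ (fun ω => (X ω, Z ω)) - entropyOf μ Z

/-- The conditional mutual information `I[X : Y | Z]`. -/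
def condMutualInfo (μ : Ω → ℝ) (X : Ω → α) (Y : Ω → β) (Z : Ω → γ) : ℝ :=
  condEntropy μ X Z + condEntropy μ Y Z - condEntropy μ (fun ω => (X ω, Y ω)) Z

theorem entropy_law (μ : Ω → ℝ) (X : Ω → α) : entropy (law μ X) = entropyOf μ X := rfl

theorem entropyOf_id (p : α → ℝ) : entropyOf p (fun ω => ω) = entropy p :=
  congrArg entropy (law_id p)

theorem entropyOf_law (μ : Ω → ℝ) (X : Ω → α) (g : α → β) :
    entropyOf (law μ X) g = entropyOf μ fun ω => g (X ω) := by
  rw [entropyOf, law_law, entropyOf]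

theorem continuous_entropy : Continuous (entropy : (α → ℝ) → ℝ) := by
  unfold entropy
  fun_prop

theorem entropyOf_eq_sum (μ : Ω → ℝ) (X : Ω → α) :
    entropyOf μ X = -∑ ω, μ ω * Real.log (law μ X (X ω)) := by
  rw [← sum_law_mul μ X fun s => Real.log (law μ X s), ← sum_neg_distrib]
  simp only [entropyOf, entropy, Real.negMulLog, neg_mul]

theorem entropyOf_congr {μ : Ω → ℝ} {X : Ω → α} {Y : Ω → β}
    (h : ∀ ω ω', μ ω ≠ 0 → μ ω' ≠ 0 → (X ω = X ω' ↔ Y ω = Y ω')) :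
    entropyOf μ X = entropyOf μ Y := by
  rw [entropyOf_eq_sum, entropyOf_eq_sum]
  congr 1
  refine sum_congr rfl fun ω _ => ?_
  rcases eq_or_ne (μ ω) 0 with hω | hω
  · rw [hω, zero_mul, zero_mul]
  · congr 2
    rw [law_eq_sum_ite, law_eq_sum_ite]
    refine sum_congr rfl fun ω' _ => ?_
    rcases eq_or_ne (μ ω') 0 with hω' | hω'
    · simp [hω']
    · simp only [h ω' ω hω' hω]

theorem entropy_prodDist {p : α → ℝ} {q : β → ℝ} (hp : p ∈ stdSimplex ℝ α)
    (hq : q ∈ stdSimplex ℝ β) : entropy (prodDist p q) = entropy p + entropy q := by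
  simp only [entropy, prodDist, Real.negMulLog_mul, Fintype.sum_prod_type, sum_add_distrib,
    ← sum_mul, ← mul_sum, hp.2, hq.2, one_mul]

theorem condEntropy_eq_sum {μ : Ω → ℝ} (hμ : μ ∈ stdSimplex ℝ Ω) (X : Ω → α) (Z : Ω → γ) :
    condEntropy μ X Z = ∑ z, law μ Z z * entropy (law (condDist μ Z z) X) := by
  have hsum (z : γ) : (∑ s, law (condDist μ Z z) X s) * Real.negMulLog (law μ Z z) =
      Real.negMulLog (law μ Z z) := by
    rcases eq_or_ne (law μ Z z) 0 with hz | hz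
    · simp [hz]
    · rw [(law_mem_stdSimplex (condDist_mem_stdSimplex hμ Z hz) X).2, one_mul]
  rw [condEntropy, sub_eq_iff_eq_add, entropyOf, entropy, Fintype.sum_prod_type_right]
  simp only [← law_mul_law_condDist hμ, Real.negMulLog_mul, sum_add_distrib, ← sum_mul, hsum,
    ← mul_sum]
  exact add_comm _ _

theorem entropy_le_neg_sum_mul_log {p q : α → ℝ} (hp : p ∈ stdSimplex ℝ α)
    (hq : q ∈ stdSimplex ℝ α) (hpq : ∀ s, p s ≠ 0 → q s ≠ 0) :
    entropy p ≤ -∑ s, p s * Real.log (q s) := by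
  have key (s : α) : Real.negMulLog (p s) ≤ -(p s * Real.log (q s)) + (q s - p s) := by
    rcases eq_or_ne (p s) 0 with hs | hs
    · simpa [hs] using hq.1 s
    · have hp0 := (hp.1 s).lt_of_ne' hs
      have hq0 := (hq.1 s).lt_of_ne' (hpq s hs)
      have hlog := Real.log_le_sub_one_of_pos (div_pos hq0 hp0)
      rw [Real.log_div hq0.ne' hs] at hlog
      have := mul_le_mul_of_nonneg_left hlog hp0.le
      rw [mul_sub_one, mul_div_cancel₀ _ hs] at this
      rw [Real.negMulLog]
      linarith
  calc entropy p ≤ ∑ s, (-(p s * Real.log (q s)) + (q s - p s)) := sum_le_sum fun s _ => key s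
    _ = -∑ s, p s * Real.log (q s) := by
      rw [sum_add_distrib, sum_sub_distrib, hp.2, hq.2, sum_neg_distrib, sub_self, add_zero]

theorem exists_neg_entropy_le_log {p : α → ℝ} (hp : p ∈ stdSimplex ℝ α) :
    ∃ w, 0 < p w ∧ -entropy p ≤ Real.log (p w) := by
  refine exists_le_of_le_sum_mul hp (le_of_eq ?_)
  simp [entropy, Real.negMulLog]

theorem entropyOf_prod_le {μ : Ω → ℝ} (hμ : μ ∈ stdSimplex ℝ Ω) (X : Ω → α) (Y : Ω → β) :
    entropyOf μ (fun ω => (X ω, Y ω)) ≤ entropyOf μ X + entropyOf μ Y := by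
  have hX := law_mem_stdSimplex hμ X
  have hY := law_mem_stdSimplex hμ Y
  have hne (s : α × β) (hs : law μ (fun ω => (X ω, Y ω)) s ≠ 0) :
      prodDist (law μ X) (law μ Y) s ≠ 0 := by
    obtain ⟨ω, hμω, rfl⟩ := exists_of_law_apply_ne_zero hs
    exact mul_ne_zero (law_apply_ne_zero hμ X hμω) (law_apply_ne_zero hμ Y hμω)
  refine (entropy_le_neg_sum_mul_log (law_mem_stdSimplex hμ _)
    (prodDist_mem_stdSimplex hX hY) hne).trans_eq ?_
  rw [entropyOf_eq_sum μ X, entropyOf_eq_sum μ Y, ← neg_add, ← sum_add_distrib,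
    sum_law_mul μ (fun ω => (X ω, Y ω))]
  congr 1
  refine sum_congr rfl fun ω _ => ?_
  rcases eq_or_ne (μ ω) 0 with hω | hω
  · simp [hω]
  · rw [prodDist, Real.log_mul (law_apply_ne_zero hμ X hω) (law_apply_ne_zero hμ Y hω), mul_add]

theorem condEntropy_le_entropyOf {μ : Ω → ℝ} (hμ : μ ∈ stdSimplex ℝ Ω) (X : Ω → α) (Z : Ω → γ) :
    condEntropy μ X Z ≤ entropyOf μ X :=
  sub_le_iff_le_add.mpr (entropyOf_prod_le hμ X Z)

theorem condMutualInfo_nonneg {μ : Ω → ℝ} (hμ : μ ∈ stdSimplex ℝ Ω) (X : Ω → α) (Y : Ω → β)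
    (Z : Ω → γ) : 0 ≤ condMutualInfo μ X Y Z := by
  simp only [condMutualInfo, condEntropy_eq_sum hμ, ← sum_add_distrib, ← sum_sub_distrib,
    ← mul_add, ← mul_sub]
  refine sum_nonneg fun z _ => ?_
  rcases eq_or_ne (law μ Z z) 0 with hz | hz
  · rw [hz, zero_mul]
  · exact mul_nonneg (law_nonneg hμ Z z)
      (sub_nonneg.mpr (entropyOf_prod_le (condDist_mem_stdSimplex hμ Z hz) X Y))

theorem condEntropy_le_condEntropy {μ : Ω → ℝ} (hμ : μ ∈ stdSimplex ℝ Ω) (X : Ω → α) {Y : Ω → β}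
    {Z : Ω → γ} (hYZ : ∀ ω ω', Y ω = Y ω' → Z ω = Z ω') :
    condEntropy μ X Y ≤ condEntropy μ X Z := by
  have h := condMutualInfo_nonneg hμ X Y Z
  have hpair : entropyOf μ (fun ω => (Y ω, Z ω)) = entropyOf μ Y :=
    entropyOf_congr fun ω ω' _ _ => by
      simpa only [Prod.mk.injEq, and_iff_left_iff_imp] using hYZ ω ω'
  have htriple : entropyOf μ (fun ω => ((X ω, Y ω), Z ω)) = entropyOf μ fun ω => (X ω, Y ω) :=
    entropyOf_congr fun ω ω' _ _ => by
      simpa only [Prod.mk.injEq, and_iff_left_iff_imp, and_imp] using fun _ => hYZ ω ω'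
  simp only [condMutualInfo, condEntropy, hpair, htriple] at h ⊢
  linarith

theorem submodularity {μ : Ω → ℝ} (hμ : μ ∈ stdSimplex ℝ Ω) (X : Ω → α) (Y : Ω → β)
    (Z : Ω → γ) :
    entropyOf μ (fun ω => (X ω, Y ω, Z ω)) + entropyOf μ Z ≤
      entropyOf μ (fun ω => (X ω, Z ω)) + entropyOf μ fun ω => (Y ω, Z ω) := by
  have h := condMutualInfo_nonneg hμ X Y Z
  have hassoc : entropyOf μ (fun ω => ((X ω, Y ω), Z ω)) = entropyOf μ fun ω => (X ω, Y ω, Z ω) :=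
    entropyOf_congr (by simp [and_assoc])
  simp only [condMutualInfo, condEntropy] at h
  linarith

end Entropy

section Products

variable {Ω Ω' Ω'' Ω''' α β γ δ : Type*} [Fintype Ω]

theorem law_equiv (μ : Ω → ℝ) (e : Ω ≃ Ω') (ω : Ω') : law μ e ω = μ (e.symm ω) := by
  simp [law_eq_sum_ite, ← Equiv.eq_symm_apply]

variable [Fintype Ω']

theorem law_prodDist_swap (μ : Ω → ℝ) (ν : Ω' → ℝ) :
    law (prodDist μ ν) (Equiv.prodComm Ω Ω') = prodDist ν μ :=
  funext fun _ => (law_equiv _ _ _).trans (mul_comm _ _)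

theorem law_prodDist_assoc [Fintype Ω''] (μ : Ω → ℝ) (ν : Ω' → ℝ) (κ : Ω'' → ℝ) :
    law (prodDist (prodDist μ ν) κ) (Equiv.prodAssoc Ω Ω' Ω'') = prodDist μ (prodDist ν κ) :=
  funext fun _ => (law_equiv _ _ _).trans (mul_assoc _ _ _)

theorem law_prodDist_prodProdProdComm [Fintype Ω''] [Fintype Ω'''] (μ : Ω → ℝ)
    (ν : Ω' → ℝ) (κ : Ω'' → ℝ) (ρ : Ω''' → ℝ) :
    law (prodDist (prodDist μ ν) (prodDist κ ρ)) (Equiv.prodProdProdComm Ω Ω' Ω'' Ω''') =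
      prodDist (prodDist μ κ) (prodDist ν ρ) :=
  funext fun _ => (law_equiv _ _ _).trans (mul_mul_mul_comm _ _ _ _)

theorem law_prodDist_rotate [Fintype Ω''] [Fintype Ω'''] (a : Ω → ℝ) (b : Ω' → ℝ) (c : Ω'' → ℝ)
    (d : Ω''' → ℝ) :
    law (prodDist (prodDist a b) (prodDist c d)) (fun ω => ((ω.1.2, ω.2.1), (ω.1.1, ω.2.2))) =
      prodDist (prodDist b c) (prodDist a d) := by
  rw [← law_prodDist_prodProdProdComm b a c d, ← law_prodDist_swap a b]
  nth_rw 2 [← law_id (prodDist c d)]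
  rw [← law_prodDist, law_law]
  rfl

theorem condDist_prodDist (μ : Ω → ℝ) (ν : Ω' → ℝ) (C : Ω → γ) (D : Ω' → δ) (c : γ × δ) :
    condDist (prodDist μ ν) (fun ω => (C ω.1, D ω.2)) c =
      prodDist (condDist μ C c.1) (condDist ν D c.2) := by
  funext ω
  simp only [condDist, law_prodDist, prodDist, Prod.ext_iff, ite_and, div_mul_div_comm, mul_ite,
    ite_mul, mul_zero, zero_mul]
  split_ifs <;> rfl

theorem condDist_prodDist_snd {μ : Ω → ℝ} (hμ : μ ∈ stdSimplex ℝ Ω) (ν : Ω' → ℝ) (D : Ω' → δ)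
    (d : δ) : condDist (prodDist μ ν) (fun ω => D ω.2) d = prodDist μ (condDist ν D d) := by
  funext ω
  simp only [condDist, law_prodDist_snd hμ, prodDist, mul_div_assoc, mul_ite, mul_zero]

/-- The joint law of two copies of `μ` which share the value of `C` and are independent given it. -/
def condCopies (μ : Ω → ℝ) (C : Ω → γ) (ω : Ω × Ω) : ℝ :=
  if C ω.1 = C ω.2 then μ ω.1 * μ ω.2 / law μ C (C ω.1) else 0

theorem condCopies_swap (μ : Ω → ℝ) (C : Ω → γ) (ω : Ω × Ω) :
    condCopies μ C ω.swap = condCopies μ C ω := by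
  by_cases h : C ω.1 = C ω.2
  · simp [condCopies, h, mul_comm]
  · simp [condCopies, h, Ne.symm h]

theorem law_condCopies_fst {μ : Ω → ℝ} (hμ : μ ∈ stdSimplex ℝ Ω) (C : Ω → γ) :
    law (condCopies μ C) Prod.fst = μ := by
  funext ω
  have hsum : ∑ ω', condCopies μ C (ω, ω') = μ ω * law μ C (C ω) / law μ C (C ω) := by
    simp only [condCopies, law_eq_sum_ite μ C, mul_sum, sum_div, mul_ite, mul_zero, ite_div,
      zero_div, eq_comm (a := C ω)]
  rw [law_eq_sum_ite, Fintype.sum_prod_type, sum_eq_single ω]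
  · simp only [if_true, hsum]
    exact mul_div_cancel_of_imp fun h => by_contra fun h' => law_apply_ne_zero hμ C h' h
  · simp +contextual
  · simp

theorem law_condCopies_snd {μ : Ω → ℝ} (hμ : μ ∈ stdSimplex ℝ Ω) (C : Ω → γ) :
    law (condCopies μ C) Prod.snd = μ := by
  have hswap : law (condCopies μ C) (Equiv.prodComm Ω Ω) = condCopies μ C :=
    funext fun ω => (law_equiv _ _ _).trans (condCopies_swap μ C ω)
  rw [← hswap, law_law]
  exact law_condCopies_fst hμ C

theorem condCopies_mem_stdSimplex {μ : Ω → ℝ} (hμ : μ ∈ stdSimplex ℝ Ω) (C : Ω → γ) :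
    condCopies μ C ∈ stdSimplex ℝ (Ω × Ω) := by
  constructor
  · intro ω
    unfold condCopies
    split_ifs
    exacts [div_nonneg (mul_nonneg (hμ.1 _) (hμ.1 _)) (law_nonneg hμ C _), le_rfl]
  · rw [← hμ.2]
    nth_rw 2 [← law_condCopies_fst hμ C]
    simpa using (sum_law_mul (condCopies μ C) Prod.fst fun _ => 1).symm

theorem eq_of_condCopies_ne_zero {μ : Ω → ℝ} {C : Ω → γ} {ω : Ω × Ω}
    (hω : condCopies μ C ω ≠ 0) : C ω.1 = C ω.2 :=
  by_contra fun h => hω (if_neg h)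

theorem condDist_condCopies {μ : Ω → ℝ} (hμ : μ ∈ stdSimplex ℝ Ω) (C : Ω → γ) (c : γ) :
    condDist (condCopies μ C) (fun ω => C ω.1) c = prodDist (condDist μ C c) (condDist μ C c) := by
  have hlaw : law (condCopies μ C) (fun ω => C ω.1) = law μ C := by
    rw [← law_law _ Prod.fst C, law_condCopies_fst hμ]
  funext ω
  simp only [condDist, hlaw, prodDist, condCopies]
  by_cases h₁ : C ω.1 = c <;> by_cases h₂ : C ω.2 = c
  · simp [h₁, h₂, div_mul_div_comm, div_div]
  all_goals simp [h₁, h₂, eq_comm (a := c)]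

theorem entropyOf_prodDist_prod [Fintype α] [Fintype β] {μ : Ω → ℝ} {ν : Ω' → ℝ}
    (hμ : μ ∈ stdSimplex ℝ Ω) (hν : ν ∈ stdSimplex ℝ Ω') (X : Ω → α) (Y : Ω' → β) :
    entropyOf (prodDist μ ν) (fun ω => (X ω.1, Y ω.2)) = entropyOf μ X + entropyOf ν Y := by
  rw [entropyOf, law_prodDist,
    entropy_prodDist (law_mem_stdSimplex hμ X) (law_mem_stdSimplex hν Y), entropyOf, entropyOf]

theorem entropyOf_condCopies_prod [Fintype α] [Fintype γ] {μ : Ω → ℝ} (hμ : μ ∈ stdSimplex ℝ Ω)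
    {X : Ω → α} {C : Ω → γ} (hXC : ∀ ω ω', X ω = X ω' → C ω = C ω') :
    entropyOf (condCopies μ C) (fun ω => (X ω.1, X ω.2)) =
      2 * entropyOf μ X - entropyOf μ C := by
  have hC : law (condCopies μ C) (fun ω => C ω.1) = law μ C := by
    rw [← law_law _ Prod.fst C, law_condCopies_fst hμ]
  have hpair : entropyOf (condCopies μ C) (fun ω => ((X ω.1, X ω.2), C ω.1)) =
      entropyOf (condCopies μ C) fun ω => (X ω.1, X ω.2) :=
    entropyOf_congr fun ω ω' _ _ => by
      simp only [Prod.mk.injEq, and_iff_left_iff_imp, and_imp]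
      exact fun h _ => hXC _ _ h
  have hX : entropyOf μ (fun ω => (X ω, C ω)) = entropyOf μ X :=
    entropyOf_congr fun ω ω' _ _ => by
      simpa only [Prod.mk.injEq, and_iff_left_iff_imp] using hXC ω ω'
  have hcond : condEntropy (condCopies μ C) (fun ω => (X ω.1, X ω.2)) (fun ω => C ω.1) =
      2 * condEntropy μ X C := by
    rw [condEntropy_eq_sum (condCopies_mem_stdSimplex hμ C), condEntropy_eq_sum hμ, mul_sum]
    refine sum_congr rfl fun c _ => ?_
    rcases eq_or_ne (law μ C c) 0 with hc | hc
    · simp [hC, hc]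
    · have hc' := law_mem_stdSimplex (condDist_mem_stdSimplex hμ C hc) X
      rw [hC, condDist_condCopies hμ, law_prodDist, entropy_prodDist hc' hc']
      ring
  rw [condEntropy, condEntropy, hpair, hX, entropyOf, entropyOf, hC, ← entropyOf] at hcond
  simp only [entropyOf] at hcond ⊢
  linarith

theorem entropyOf_condCopies_cross_le [Fintype α] [Fintype β] [Fintype δ] {μ : Ω → ℝ}
    (hμ : μ ∈ stdSimplex ℝ Ω) (X : Ω → α) (Y : Ω → β) {S : Ω → δ} {C : Ω → γ}
    (hCS : ∀ ω ω', C ω = C ω' → S ω = S ω') :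
    entropyOf (condCopies μ C) (fun ω => (X ω.1, Y ω.2, S ω.1)) + entropyOf μ S ≤
      entropyOf μ (fun ω => (X ω, S ω)) + entropyOf μ fun ω => (Y ω, S ω) := by
  have h := submodularity (condCopies_mem_stdSimplex hμ C) (fun ω => X ω.1) (fun ω => Y ω.2)
    fun ω => S ω.1
  have hY : entropyOf (condCopies μ C) (fun ω => (Y ω.2, S ω.1)) =
      entropyOf (condCopies μ C) fun ω => (Y ω.2, S ω.2) :=
    entropyOf_congr fun ω ω' hω hω' => by
      rw [hCS _ _ (eq_of_condCopies_ne_zero hω), hCS _ _ (eq_of_condCopies_ne_zero hω')]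
  rwa [hY, ← entropyOf_law _ Prod.fst S, ← entropyOf_law _ Prod.fst fun ω => (X ω, S ω),
    ← entropyOf_law _ Prod.snd fun ω => (Y ω, S ω), law_condCopies_fst hμ,
    law_condCopies_snd hμ] at h

end Products

section Convolution

variable {G Ω Ω' γ : Type*} [AddCommGroup G] [Fintype G] [Fintype Ω] [Fintype Ω'] [Fintype γ]

/-- The convolution of two weights on a group: the law of the sum of independent variables. -/
def conv (x y : G → ℝ) : G → ℝ := law (prodDist x y) fun ω => ω.1 + ω.2

theorem conv_mem_stdSimplex {x y : G → ℝ} (hx : x ∈ stdSimplex ℝ G) (hy : y ∈ stdSimplex ℝ G) :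
    conv x y ∈ stdSimplex ℝ G :=
  law_mem_stdSimplex (prodDist_mem_stdSimplex hx hy) _

theorem law_add_prodDist (μ : Ω → ℝ) (ν : Ω' → ℝ) (X : Ω → G) (Y : Ω' → G) :
    law (prodDist μ ν) (fun ω => X ω.1 + Y ω.2) = conv (law μ X) (law ν Y) := by
  rw [conv, ← law_prodDist, law_law]

theorem conv_apply (x y : G → ℝ) (w : G) : conv x y w = ∑ b, y b * x (w - b) := by
  rw [conv, law_eq_sum_ite, Fintype.sum_prod_type_right]
  simp [prodDist, ← eq_sub_iff_add_eq, mul_comm]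

theorem conv_comm (x y : G → ℝ) : conv x y = conv y x := by
  rw [conv, ← law_prodDist_swap y x, law_law]
  simp [conv, add_comm]

theorem conv_assoc (x y z : G → ℝ) : conv (conv x y) z = conv x (conv y z) := by
  have hl := law_add_prodDist (prodDist x y) z (fun ω => ω.1 + ω.2) (fun ω => ω)
  have hr := law_add_prodDist x (prodDist y z) (fun ω => ω) (fun ω => ω.1 + ω.2)
  rw [law_id] at hl hr
  rw [← law_prodDist_assoc, law_law] at hr
  exact hl.symm.trans (Eq.trans (by simp [add_assoc]) hr)

theorem conv_conv_conv_comm (a b c d : G → ℝ) :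
    conv (conv a b) (conv c d) = conv (conv a c) (conv b d) := by
  rw [conv_assoc, conv_assoc, ← conv_assoc b, conv_comm b c, conv_assoc c]

theorem entropy_le_entropy_conv_left {x y : G → ℝ} (hx : x ∈ stdSimplex ℝ G)
    (hy : y ∈ stdSimplex ℝ G) : entropy x ≤ entropy (conv x y) := by
  have hsub := entropyOf_prod_le (prodDist_mem_stdSimplex hx hy) (fun ω => ω.1 + ω.2) Prod.snd
  have hpair : entropyOf (prodDist x y) (fun ω => (ω.1 + ω.2, ω.2)) =
      entropyOf (prodDist x y) fun ω => (ω.1, ω.2) :=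
    entropyOf_congr fun ω ω' _ _ => by
      simp only [Prod.mk.injEq, and_congr_left_iff]
      rintro h
      rw [h, add_left_inj]
  have hsnd : entropyOf (prodDist x y) Prod.snd = entropy y := by
    rw [entropyOf, law_prodDist_snd hx y fun ω => ω, law_id]
  rw [hpair, entropyOf_prodDist_prod hx hy (fun ω => ω) fun ω => ω, entropyOf_id, entropyOf_id,
    hsnd] at hsub
  exact le_of_add_le_add_right hsub

/-- The Kaimanovich–Vershik–Madiman inequality. -/
theorem entropy_conv_conv_add_le {x y z : G → ℝ} (hx : x ∈ stdSimplex ℝ G)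
    (hy : y ∈ stdSimplex ℝ G) (hz : z ∈ stdSimplex ℝ G) :
    entropy (conv (conv x y) z) + entropy y ≤ entropy (conv x y) + entropy (conv y z) := by
  have hμ := prodDist_mem_stdSimplex (prodDist_mem_stdSimplex hx hy) hz
  have hsub := submodularity hμ (fun ω => ω.1.1) (fun ω => ω.2) fun ω => ω.1.1 + ω.1.2 + ω.2
  have hsum : entropyOf (prodDist (prodDist x y) z) (fun ω => ω.1.1 + ω.1.2 + ω.2) =
      entropy (conv (conv x y) z) := by
    rw [entropyOf, law_add_prodDist (prodDist x y) z (fun ω => ω.1 + ω.2) fun ω => ω, law_id]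
    rfl
  have htriple : entropyOf (prodDist (prodDist x y) z)
      (fun ω => (ω.1.1, ω.2, ω.1.1 + ω.1.2 + ω.2)) = entropy x + entropy y + entropy z := by
    rw [← entropy_prodDist hx hy, ← entropy_prodDist (prodDist_mem_stdSimplex hx hy) hz,
      ← congrArg entropy (law_id (prodDist (prodDist x y) z))]
    exact entropyOf_congr fun ω ω' _ _ => by
      simp only [Prod.ext_iff]
      grind
  have hleft : entropyOf (prodDist (prodDist x y) z) (fun ω => (ω.1.1, ω.1.1 + ω.1.2 + ω.2)) =
      entropy x + entropy (conv y z) := by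
    rw [← entropyOf_id x, conv, entropy_law, ← entropyOf_prodDist_prod hx
      (prodDist_mem_stdSimplex hy hz), ← law_prodDist_assoc, entropyOf_law]
    exact entropyOf_congr fun ω ω' _ _ => by
      simp only [Equiv.prodAssoc_apply, Prod.mk.injEq]
      grind
  have hright : entropyOf (prodDist (prodDist x y) z) (fun ω => (ω.2, ω.1.1 + ω.1.2 + ω.2)) =
      entropy (conv x y) + entropy z := by
    rw [← entropyOf_id z, conv, entropy_law, ← entropyOf_prodDist_prod
      (prodDist_mem_stdSimplex hx hy) hz]
    exact entropyOf_congr fun ω ω' _ _ => by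
      simp only [Prod.mk.injEq]
      grind
  rw [hsum, htriple, hleft, hright] at hsub
  linarith

theorem sum_law_mul_entropy_conv_le {z : G → ℝ} {μ : Ω → ℝ} (hz : z ∈ stdSimplex ℝ G)
    (hμ : μ ∈ stdSimplex ℝ Ω) (T : Ω → G) (C : Ω → γ) :
    ∑ c, law μ C c * entropy (conv z (law (condDist μ C c) T)) ≤
      entropy (conv z (law μ T)) := by
  have h := condEntropy_le_entropyOf (prodDist_mem_stdSimplex hz hμ)
    (fun ω => ω.1 + T ω.2) fun ω => C ω.2
  simpa only [condEntropy_eq_sum (prodDist_mem_stdSimplex hz hμ), law_prodDist_snd hz,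
    condDist_prodDist_snd hz, entropyOf, law_add_prodDist _ _ (fun ω => ω), law_id] using h

theorem sum_law_mul_entropy_conv_condDist {μ : Ω → ℝ} (hμ : μ ∈ stdSimplex ℝ Ω) (U V : Ω → G)
    (C : Ω → γ) :
    ∑ c, law μ C c * entropy (conv (law (condDist μ C c) U) (law (condDist μ C c) V)) =
      condEntropy (condCopies μ C) (fun ω => U ω.1 + V ω.2) fun ω => C ω.1 := by
  simp only [condEntropy_eq_sum (condCopies_mem_stdSimplex hμ C), condDist_condCopies hμ,
    law_add_prodDist, ← law_law (condCopies μ C) Prod.fst C, law_condCopies_fst hμ]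

end Convolution

section BalogSzemerediGowers

variable {G Ω γ δ : Type*} [AddCommGroup G] [Module (ZMod 2) G] [Fintype G] [Fintype Ω] [Fintype γ]
  [Fintype δ]

theorem entropyOf_condCopies_add_le {μ : Ω → ℝ} (hμ : μ ∈ stdSimplex ℝ Ω)
    {U V : Ω → G} {S : Ω → γ} {C : Ω → δ}
    (hC : ∀ ω ω', C ω = C ω' ↔ U ω + V ω = U ω' + V ω' ∧ S ω = S ω') :
    2 * entropyOf μ (fun ω => (U ω, V ω, S ω)) - entropyOf μ C +
        entropyOf (condCopies μ C) (fun ω => (U ω.1 + V ω.2, S ω.1)) ≤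
      entropyOf (condCopies μ C) (fun ω => (U ω.1, V ω.2, S ω.1)) +
        entropyOf (condCopies μ C) fun ω => (V ω.1, U ω.2, S ω.1) := by
  have hsupp (ω : Ω × Ω) (hω : condCopies μ C ω ≠ 0) := (hC _ _).mp (eq_of_condCopies_ne_zero hω)
  have hcross (ω : Ω × Ω) (hω : condCopies μ C ω ≠ 0) : U ω.1 + V ω.2 = V ω.1 + U ω.2 := by
    rw [← sub_eq_zero, ZModModule.sub_eq_add, add_add_add_comm, add_comm (V ω.2),
      (hsupp ω hω).1, ZModModule.add_self]
  have hU : entropyOf (condCopies μ C) (fun ω => (U ω.1, U ω.1 + V ω.2, S ω.1)) =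
      entropyOf (condCopies μ C) fun ω => (U ω.1, V ω.2, S ω.1) :=
    entropyOf_congr fun ω ω' _ _ => by
      simp only [Prod.mk.injEq, and_congr_right_iff]
      rintro h
      rw [h, add_right_inj]
  have hV : entropyOf (condCopies μ C) (fun ω => (V ω.1, U ω.1 + V ω.2, S ω.1)) =
      entropyOf (condCopies μ C) fun ω => (V ω.1, U ω.2, S ω.1) :=
    entropyOf_congr fun ω ω' hω hω' => by
      simp only [Prod.mk.injEq, hcross ω hω, hcross ω' hω', and_congr_right_iff]
      rintro h
      rw [h, add_right_inj]
  have hall : entropyOf (condCopies μ C) (fun ω => (U ω.1, V ω.1, U ω.1 + V ω.2, S ω.1)) =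
      entropyOf (condCopies μ C) fun ω => ((U ω.1, V ω.1, S ω.1), (U ω.2, V ω.2, S ω.2)) :=
    entropyOf_congr fun ω ω' hω hω' => by
      simp only [Prod.mk.injEq, ← (hsupp ω hω).2, ← (hsupp ω' hω').2]
      constructor
      · rintro ⟨hU₁, hV₁, hsum, hS⟩
        have hV₂ : V ω.2 = V ω'.2 := by rwa [hU₁, add_right_inj] at hsum
        have hU₂ : U ω.2 = U ω'.2 := by
          rwa [hcross ω hω, hcross ω' hω', hV₁, add_right_inj] at hsum
        exact ⟨⟨hU₁, hV₁, hS⟩, hU₂, hV₂, hS⟩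
      · rintro ⟨⟨hU₁, hV₁, hS⟩, -, hV₂, -⟩
        exact ⟨hU₁, hV₁, by rw [hU₁, hV₂], hS⟩
  have hsub := submodularity (condCopies_mem_stdSimplex hμ C) (fun ω => U ω.1) (fun ω => V ω.1)
    fun ω => (U ω.1 + V ω.2, S ω.1)
  rw [entropyOf_condCopies_prod hμ (X := fun ω => (U ω, V ω, S ω)) fun ω ω' h => (hC ω ω').mpr
    (by simp only [Prod.mk.injEq] at h; simp only [h, and_self])] at hall
  rwa [hall, hU, hV] at hsub

/-- The entropic Balog–Szemerédi–Gowers inequality, relative to a side variable `S`. -/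
theorem sum_law_mul_entropy_conv_le_add_condMutualInfo {μ : Ω → ℝ} (hμ : μ ∈ stdSimplex ℝ Ω)
    {U V : Ω → G} {S : Ω → γ} {C : Ω → δ}
    (hC : ∀ ω ω', C ω = C ω' ↔ U ω + V ω = U ω' + V ω' ∧ S ω = S ω') :
    ∑ c, law μ C c * entropy (conv (law (condDist μ C c) U) (law (condDist μ C c) V)) ≤
      condEntropy μ (fun ω => U ω + V ω) S + 2 * condMutualInfo μ U V S := by
  have hCS (ω ω' : Ω) (h : C ω = C ω') : S ω = S ω' := ((hC ω ω').mp h).2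
  have hmono := condEntropy_le_condEntropy (condCopies_mem_stdSimplex hμ C)
    (fun ω => U ω.1 + V ω.2) (Y := fun ω => C ω.1) (Z := fun ω => S ω.1) fun _ _ => hCS _ _
  have hpair : entropyOf μ C = entropyOf μ fun ω => (U ω + V ω, S ω) :=
    entropyOf_congr fun ω ω' _ _ => by rw [hC, Prod.mk.injEq]
  have hassoc : entropyOf μ (fun ω => ((U ω, V ω), S ω)) = entropyOf μ fun ω => (U ω, V ω, S ω) :=
    entropyOf_congr (by simp [and_assoc])
  have hS : entropyOf (condCopies μ C) (fun ω => S ω.1) = entropyOf μ S := by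
    rw [← entropyOf_law _ Prod.fst S, law_condCopies_fst hμ]
  have hadd := entropyOf_condCopies_add_le hμ hC
  have hUV := entropyOf_condCopies_cross_le hμ U V hCS
  have hVU := entropyOf_condCopies_cross_le hμ V U hCS
  rw [sum_law_mul_entropy_conv_condDist hμ]
  simp only [condEntropy, condMutualInfo] at hmono ⊢
  linarith

end BalogSzemerediGowers

section RuzsaDistance

variable {G Ω γ : Type*} [AddCommGroup G] [Fintype G] [Fintype Ω] [Fintype γ]

/-- The entropic Ruzsa distance of two weights, defined with a sum in place of the usual difference;
the two agree in characteristic two. -/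
def ruzsaDist (x y : G → ℝ) : ℝ := entropy (conv x y) - entropy x / 2 - entropy y / 2

/-- The functional minimised in the entropic proof of the polynomial Freiman–Ruzsa theorem, with
both reference weights equal to `z`. -/
def pfrFunctional (η : ℝ) (z x y : G → ℝ) : ℝ :=
  ruzsaDist x y + η * (ruzsaDist z x + ruzsaDist z y)

theorem ruzsaDist_comm (x y : G → ℝ) : ruzsaDist x y = ruzsaDist y x := by
  rw [ruzsaDist, ruzsaDist, conv_comm]
  ring

theorem entropy_le_entropy_conv_right {x y : G → ℝ} (hx : x ∈ stdSimplex ℝ G)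
    (hy : y ∈ stdSimplex ℝ G) : entropy y ≤ entropy (conv x y) :=
  conv_comm y x ▸ entropy_le_entropy_conv_left hy hx

theorem ruzsaDist_nonneg {x y : G → ℝ} (hx : x ∈ stdSimplex ℝ G) (hy : y ∈ stdSimplex ℝ G) :
    0 ≤ ruzsaDist x y := by
  have hleft := entropy_le_entropy_conv_left hx hy
  have hright := entropy_le_entropy_conv_right hx hy
  rw [ruzsaDist]
  linarith

theorem ruzsaDist_conv_le {x y z : G → ℝ} (hx : x ∈ stdSimplex ℝ G) (hy : y ∈ stdSimplex ℝ G)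
    (hz : z ∈ stdSimplex ℝ G) :
    ruzsaDist z (conv x y) ≤ ruzsaDist z x + (entropy (conv x y) - entropy x) / 2 := by
  have h := entropy_conv_conv_add_le hz hx hy
  rw [ruzsaDist, ruzsaDist, ← conv_assoc]
  linarith

theorem continuous_ruzsaDist_comp {X : Type*} [TopologicalSpace X] {u v : X → G → ℝ}
    (hu : Continuous u) (hv : Continuous v) : Continuous fun a => ruzsaDist (u a) (v a) := by
  have hconv : Continuous fun a => conv (u a) (v a) := by
    unfold conv law prodDist
    fun_prop
  have hsum : Continuous fun a => entropy (conv (u a) (v a)) := continuous_entropy.comp hconv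
  have hfst : Continuous fun a => entropy (u a) := continuous_entropy.comp hu
  have hsnd : Continuous fun a => entropy (v a) := continuous_entropy.comp hv
  exact (hsum.sub (hfst.div_const 2)).sub (hsnd.div_const 2)

theorem exists_pfrFunctional_le (η : ℝ) {z : G → ℝ} (hz : z ∈ stdSimplex ℝ G) :
    ∃ x ∈ stdSimplex ℝ G, ∃ y ∈ stdSimplex ℝ G, ∀ a ∈ stdSimplex ℝ G, ∀ b ∈ stdSimplex ℝ G,
      pfrFunctional η z x y ≤ pfrFunctional η z a b := by
  have hcont : Continuous fun p : (G → ℝ) × (G → ℝ) => pfrFunctional η z p.1 p.2 :=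
    (continuous_ruzsaDist_comp continuous_fst continuous_snd).add (continuous_const.mul
      ((continuous_ruzsaDist_comp continuous_const continuous_fst).add
        (continuous_ruzsaDist_comp continuous_const continuous_snd)))
  have hne : (stdSimplex ℝ G ×ˢ stdSimplex ℝ G).Nonempty := ⟨(z, z), Set.mk_mem_prod hz hz⟩
  obtain ⟨p, hp, hmin⟩ := ((isCompact_stdSimplex ℝ G).prod
    (isCompact_stdSimplex ℝ G)).exists_isMinOn hne hcont.continuousOn
  exact ⟨p.1, hp.1, p.2, hp.2, fun a ha b hb => isMinOn_iff.mp hmin (a, b) (Set.mk_mem_prod ha hb)⟩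

theorem le_of_le_pfrFunctional {η t : ℝ} (hη : 0 ≤ η) {z : G → ℝ} (hz : z ∈ stdSimplex ℝ G)
    (ht : ∀ a ∈ stdSimplex ℝ G, ∀ b ∈ stdSimplex ℝ G, t ≤ pfrFunctional η z a b)
    {μ : Ω → ℝ} (hμ : μ ∈ stdSimplex ℝ Ω) (T₁ T₂ : Ω → G) (C : Ω → γ) :
    t ≤ ∑ c, law μ C c * entropy (conv (law (condDist μ C c) T₁) (law (condDist μ C c) T₂)) -
        (condEntropy μ T₁ C + condEntropy μ T₂ C) / 2 +
      η * (entropy (conv z (law μ T₁)) + entropy (conv z (law μ T₂)) - entropy z -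
        (condEntropy μ T₁ C + condEntropy μ T₂ C) / 2) := by
  have hsum : ∑ c, law μ C c = 1 := (law_mem_stdSimplex hμ C).2
  have h₁ := sum_law_mul_entropy_conv_le hz hμ T₁ C
  have h₂ := sum_law_mul_entropy_conv_le hz hμ T₂ C
  calc t = ∑ c, law μ C c * t := by rw [← sum_mul, hsum, one_mul]
    _ ≤ ∑ c, law μ C c *
        pfrFunctional η z (law (condDist μ C c) T₁) (law (condDist μ C c) T₂) := by
      refine sum_le_sum fun c _ => ?_
      rcases eq_or_ne (law μ C c) 0 with hc | hc
      · rw [hc, zero_mul, zero_mul]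
      · have hc' := condDist_mem_stdSimplex hμ C hc
        exact mul_le_mul_of_nonneg_left
          (ht _ (law_mem_stdSimplex hc' _) _ (law_mem_stdSimplex hc' _)) (law_nonneg hμ C c)
    _ = ∑ c, law μ C c * entropy (conv (law (condDist μ C c) T₁) (law (condDist μ C c) T₂)) -
          (condEntropy μ T₁ C + condEntropy μ T₂ C) / 2 +
        η * (∑ c, law μ C c * entropy (conv z (law (condDist μ C c) T₁)) +
          ∑ c, law μ C c * entropy (conv z (law (condDist μ C c) T₂)) -
          (∑ c, law μ C c) * entropy z -
          (condEntropy μ T₁ C + condEntropy μ T₂ C) / 2) := by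
      rw [condEntropy_eq_sum hμ, condEntropy_eq_sum hμ]
      simp only [← sum_add_distrib, ← sum_sub_distrib, sum_mul, mul_sum, sum_div]
      refine sum_congr rfl fun c _ => ?_
      rw [pfrFunctional, ruzsaDist, ruzsaDist, ruzsaDist]
      ring
    _ ≤ _ := by
      rw [hsum, one_mul]
      gcongr

end RuzsaDistance

section Fibring

variable {G : Type*} [AddCommGroup G] [Fintype G] {a b c d : G → ℝ}

theorem entropyOf_add_pair (ha : a ∈ stdSimplex ℝ G) (hb : b ∈ stdSimplex ℝ G)
    (hc : c ∈ stdSimplex ℝ G) (hd : d ∈ stdSimplex ℝ G) :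
    entropyOf (prodDist (prodDist a b) (prodDist c d))
        (fun ω => (ω.1.1 + ω.1.2, ω.1.1 + ω.1.2 + (ω.2.1 + ω.2.2))) =
      entropy (conv a b) + entropy (conv c d) := by
  rw [conv, conv, entropy_law, entropy_law,
    ← entropyOf_prodDist_prod (prodDist_mem_stdSimplex ha hb) (prodDist_mem_stdSimplex hc hd)]
  exact entropyOf_congr fun ω ω' _ _ => by
    simp only [Prod.mk.injEq, and_congr_right_iff]
    rintro h
    rw [h, add_right_inj]

theorem entropyOf_add_pair_comm (ha : a ∈ stdSimplex ℝ G) (hb : b ∈ stdSimplex ℝ G)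
    (hc : c ∈ stdSimplex ℝ G) (hd : d ∈ stdSimplex ℝ G) :
    entropyOf (prodDist (prodDist a b) (prodDist c d))
        (fun ω => (ω.1.1 + ω.2.1, ω.1.1 + ω.1.2 + (ω.2.1 + ω.2.2))) =
      entropy (conv a c) + entropy (conv b d) := by
  rw [← entropyOf_add_pair ha hc hb hd, ← law_prodDist_prodProdProdComm, entropyOf_law]
  simp only [Equiv.prodProdProdComm_apply, add_add_add_comm]

theorem entropyOf_add_add (a b c d : G → ℝ) :
    entropyOf (prodDist (prodDist a b) (prodDist c d))
        (fun ω => ω.1.1 + ω.1.2 + (ω.2.1 + ω.2.2)) = entropy (conv (conv a b) (conv c d)) :=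
  congrArg entropy (law_add_prodDist (prodDist a b) (prodDist c d) (fun ω => ω.1 + ω.2)
    fun ω => ω.1 + ω.2)

theorem condEntropy_fst_add_pair (ha : a ∈ stdSimplex ℝ G) (hb : b ∈ stdSimplex ℝ G)
    (hc : c ∈ stdSimplex ℝ G) (hd : d ∈ stdSimplex ℝ G) :
    condEntropy (prodDist (prodDist a b) (prodDist c d)) (fun ω => ω.1.1)
        (fun ω => (ω.1.1 + ω.1.2, ω.2.1 + ω.2.2)) =
      entropy a + entropy b - entropy (conv a b) := by
  have hab := prodDist_mem_stdSimplex ha hb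
  have hcd := prodDist_mem_stdSimplex hc hd
  have hpair : entropyOf (prodDist (prodDist a b) (prodDist c d))
      (fun ω => (ω.1.1, ω.1.1 + ω.1.2, ω.2.1 + ω.2.2)) =
      entropyOf (prodDist (prodDist a b) (prodDist c d)) fun ω => (ω.1, ω.2.1 + ω.2.2) :=
    entropyOf_congr fun ω ω' _ _ => by
      simp only [Prod.ext_iff]
      grind
  rw [condEntropy, hpair, entropyOf_prodDist_prod hab hcd (fun ω => ω) fun ω => ω.1 + ω.2,
    entropyOf_prodDist_prod hab hcd (fun ω => ω.1 + ω.2) fun ω => ω.1 + ω.2, entropyOf_id,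
    entropy_prodDist ha hb, add_sub_add_right_eq_sub, conv, entropy_law]

theorem condEntropy_snd_add_pair (ha : a ∈ stdSimplex ℝ G) (hb : b ∈ stdSimplex ℝ G)
    (hc : c ∈ stdSimplex ℝ G) (hd : d ∈ stdSimplex ℝ G) :
    condEntropy (prodDist (prodDist a b) (prodDist c d)) (fun ω => ω.2.1)
        (fun ω => (ω.1.1 + ω.1.2, ω.2.1 + ω.2.2)) =
      entropy c + entropy d - entropy (conv c d) := by
  rw [← condEntropy_fst_add_pair hc hd ha hb, ← law_prodDist_swap (prodDist a b), condEntropy,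
    condEntropy, entropyOf_law, entropyOf_law]
  congr 1 <;> exact entropyOf_congr fun ω ω' _ _ => by
    simp [and_comm]

theorem condEntropy_add_prodDist {Ω Ω' γ δ : Type*} [Fintype Ω] [Fintype Ω'] [Fintype γ] [Fintype δ]
    {μ : Ω → ℝ} {ν : Ω' → ℝ} (hμ : μ ∈ stdSimplex ℝ Ω) (hν : ν ∈ stdSimplex ℝ Ω') (X : Ω → G)
    (Y : Ω' → G) (C : Ω → γ) (D : Ω' → δ) :
    condEntropy (prodDist μ ν) (fun ω => X ω.1 + Y ω.2) (fun ω => (C ω.1, D ω.2)) =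
      ∑ s, law (prodDist μ ν) (fun ω => (C ω.1, D ω.2)) s *
        entropy (conv (law (condDist (prodDist μ ν) (fun ω => (C ω.1, D ω.2)) s) fun ω => X ω.1)
          (law (condDist (prodDist μ ν) (fun ω => (C ω.1, D ω.2)) s) fun ω => Y ω.2)) := by
  rw [condEntropy_eq_sum (prodDist_mem_stdSimplex hμ hν)]
  refine sum_congr rfl fun s _ => ?_
  rcases eq_or_ne (law (prodDist μ ν) (fun ω => (C ω.1, D ω.2)) s) 0 with hs | hs
  · rw [hs, zero_mul, zero_mul]
  · have hpair : law μ C s.1 * law ν D s.2 ≠ 0 := by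
      rwa [law_prodDist] at hs
    rw [condDist_prodDist, law_add_prodDist,
      law_prodDist_fst _ (condDist_mem_stdSimplex hν D (right_ne_zero_of_mul hpair)),
      law_prodDist_snd (condDist_mem_stdSimplex hμ C (left_ne_zero_of_mul hpair))]

/-- The conditional mutual information `I[A + B : A + C | A + B + C + D]` of independent variables
with laws `a`, `b`, `c`, `d`, the error term of the fibring inequality. -/
def fibringInfo (a b c d : G → ℝ) : ℝ :=
  condMutualInfo (prodDist (prodDist a b) (prodDist c d)) (fun ω => ω.1.1 + ω.1.2)
    (fun ω => ω.1.1 + ω.2.1) (fun ω => ω.1.1 + ω.1.2 + (ω.2.1 + ω.2.2))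

theorem fibringInfo_eq (ha : a ∈ stdSimplex ℝ G) (hb : b ∈ stdSimplex ℝ G) (hc : c ∈ stdSimplex ℝ G)
    (hd : d ∈ stdSimplex ℝ G) :
    fibringInfo a b c d =
      entropy (conv a b) + entropy (conv c d) + entropy (conv a c) + entropy (conv b d) -
        entropy (conv (conv a b) (conv c d)) -
        entropyOf (prodDist (prodDist a b) (prodDist c d)) fun ω =>
          ((ω.1.1 + ω.1.2, ω.1.1 + ω.2.1), ω.1.1 + ω.1.2 + (ω.2.1 + ω.2.2)) := by
  rw [fibringInfo, condMutualInfo, condEntropy, condEntropy, condEntropy,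
    entropyOf_add_pair ha hb hc hd, entropyOf_add_pair_comm ha hb hc hd, entropyOf_add_add]
  ring

/-- The fibring inequality: the bound `t` is applied to the sums `A + B`, `C + D` and to `A`, `C`
conditioned on these sums. -/
theorem two_mul_add_fibringInfo_le {η t : ℝ} (hη : 0 ≤ η) {z : G → ℝ} (hz : z ∈ stdSimplex ℝ G)
    (ht : ∀ a ∈ stdSimplex ℝ G, ∀ b ∈ stdSimplex ℝ G, t ≤ pfrFunctional η z a b)
    (ha : a ∈ stdSimplex ℝ G) (hb : b ∈ stdSimplex ℝ G) (hc : c ∈ stdSimplex ℝ G)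
    (hd : d ∈ stdSimplex ℝ G) :
    2 * t + fibringInfo a b c d ≤
      ruzsaDist a c + ruzsaDist b d +
        η * (2 * (ruzsaDist z a + ruzsaDist z c) + ruzsaDist a b + ruzsaDist c d) := by
  have hab := prodDist_mem_stdSimplex ha hb
  have hcd := prodDist_mem_stdSimplex hc hd
  have hμ := prodDist_mem_stdSimplex hab hcd
  have hsums := ht _ (conv_mem_stdSimplex ha hb) _ (conv_mem_stdSimplex hc hd)
  have hη₁ := mul_le_mul_of_nonneg_left (ruzsaDist_conv_le ha hb hz) hη
  have hη₂ := mul_le_mul_of_nonneg_left (ruzsaDist_conv_le hc hd hz) hη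
  have hfibres := le_of_le_pfrFunctional hη hz ht hμ (fun ω => ω.1.1) (fun ω => ω.2.1)
    fun ω => (ω.1.1 + ω.1.2, ω.2.1 + ω.2.2)
  have hcond := condEntropy_add_prodDist hab hcd Prod.fst Prod.fst (fun ω => ω.1 + ω.2)
    fun ω => ω.1 + ω.2
  have hpair : entropyOf (prodDist (prodDist a b) (prodDist c d))
      (fun ω => (ω.1.1 + ω.2.1, ω.1.1 + ω.1.2, ω.2.1 + ω.2.2)) =
      entropyOf (prodDist (prodDist a b) (prodDist c d)) fun ω =>
        ((ω.1.1 + ω.1.2, ω.1.1 + ω.2.1), ω.1.1 + ω.1.2 + (ω.2.1 + ω.2.2)) :=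
    entropyOf_congr fun ω ω' _ _ => by
      simp only [Prod.mk.injEq]
      constructor
      · rintro ⟨h₁, h₂, h₃⟩
        exact ⟨⟨h₂, h₁⟩, by rw [h₂, h₃]⟩
      · rintro ⟨⟨h₁, h₂⟩, h₃⟩
        exact ⟨h₂, h₁, by rwa [h₁, add_right_inj] at h₃⟩
  have hsum : entropyOf (prodDist (prodDist a b) (prodDist c d))
      (fun ω => (ω.1.1 + ω.1.2, ω.2.1 + ω.2.2)) = entropy (conv a b) + entropy (conv c d) := by
    rw [entropyOf_prodDist_prod hab hcd (fun ω => ω.1 + ω.2) fun ω => ω.1 + ω.2]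
    rfl
  have hfst : law (prodDist (prodDist a b) (prodDist c d)) (fun ω => ω.1.1) = a := by
    rw [law_prodDist_fst _ hcd Prod.fst, law_prodDist_fst a hb fun s => s, law_id]
  have hsnd : law (prodDist (prodDist a b) (prodDist c d)) (fun ω => ω.2.1) = c := by
    rw [law_prodDist_snd hab _ Prod.fst, law_prodDist_fst c hd fun s => s, law_id]
  rw [← hcond, hfst, hsnd, condEntropy_fst_add_pair ha hb hc hd,
    condEntropy_snd_add_pair ha hb hc hd, condEntropy, hpair, hsum] at hfibres
  rw [fibringInfo_eq ha hb hc hd]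
  rw [pfrFunctional] at hsums
  simp only [ruzsaDist] at *
  linarith

end Fibring

section Endgame

variable {G : Type*} [AddCommGroup G] [Fintype G] {a b c d x y z : G → ℝ}

theorem entropyOf_add_pair_rotate (ha : a ∈ stdSimplex ℝ G) (hb : b ∈ stdSimplex ℝ G)
    (hc : c ∈ stdSimplex ℝ G) (hd : d ∈ stdSimplex ℝ G) :
    entropyOf (prodDist (prodDist a b) (prodDist c d))
        (fun ω => (ω.1.2 + ω.2.1, ω.1.1 + ω.1.2 + (ω.2.1 + ω.2.2))) =
      entropy (conv b c) + entropy (conv a d) := by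
  rw [← entropyOf_add_pair hb hc ha hd, ← law_prodDist_rotate a b c d, entropyOf_law]
  congr 1
  funext ω
  rw [Prod.mk.injEq]
  exact ⟨rfl, by abel⟩

theorem entropy_conv_conv_swap_le (hx : x ∈ stdSimplex ℝ G) (hy : y ∈ stdSimplex ℝ G) :
    entropy (conv (conv x y) (conv y x)) + entropy x + entropy y ≤ 3 * entropy (conv x y) := by
  have h₁ := entropy_conv_conv_add_le hy hx hy
  have h₂ := entropy_conv_conv_add_le (conv_mem_stdSimplex hy hx) hy hx
  rw [conv_assoc] at h₂
  rw [conv_comm y x] at *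
  linarith

theorem condEntropy_left_add {Ω γ : Type*} [Fintype Ω] [Fintype γ] (μ : Ω → ℝ) (U V : Ω → G)
    (S : Ω → γ) :
    condEntropy μ U (fun ω => (U ω + V ω, S ω)) =
      entropyOf μ (fun ω => ((U ω, V ω), S ω)) - entropyOf μ fun ω => (U ω + V ω, S ω) := by
  rw [condEntropy]
  congr 1
  exact entropyOf_congr fun ω ω' _ _ => by
    simp only [Prod.mk.injEq, ← and_assoc, and_congr_left_iff]
    rintro -
    exact and_congr_right fun h => by rw [h, add_right_inj]

theorem condEntropy_right_add {Ω γ : Type*} [Fintype Ω] [Fintype γ] (μ : Ω → ℝ) (U V : Ω → G)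
    (S : Ω → γ) :
    condEntropy μ V (fun ω => (U ω + V ω, S ω)) =
      entropyOf μ (fun ω => ((U ω, V ω), S ω)) - entropyOf μ fun ω => (U ω + V ω, S ω) := by
  rw [condEntropy]
  congr 1
  exact entropyOf_congr fun ω ω' _ _ => by
    simp only [Prod.mk.injEq, ← and_assoc, and_congr_left_iff]
    rintro -
    rw [and_comm (a := U ω = U ω')]
    exact and_congr_right fun h => by rw [h, add_left_inj]

variable [Module (ZMod 2) G]

theorem entropyOf_add_triple_rotate (a b c d : G → ℝ) :
    entropyOf (prodDist (prodDist b c) (prodDist a d))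
        (fun ω => ((ω.1.1 + ω.1.2, ω.1.1 + ω.2.1), ω.1.1 + ω.1.2 + (ω.2.1 + ω.2.2))) =
      entropyOf (prodDist (prodDist a b) (prodDist c d)) fun ω =>
        ((ω.1.1 + ω.1.2, ω.1.1 + ω.2.1), ω.1.1 + ω.1.2 + (ω.2.1 + ω.2.2)) := by
  rw [← law_prodDist_rotate, entropyOf_law]
  refine entropyOf_congr fun ω ω' _ _ => ?_
  have hrot (ω : (G × G) × G × G) : ω.1.2 + ω.2.1 + (ω.1.1 + ω.2.2) =
      ω.1.1 + ω.1.2 + (ω.2.1 + ω.2.2) := by abel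
  have hsum (ω : (G × G) × G × G) :
      ω.1.2 + ω.2.1 = (ω.1.1 + ω.1.2) + (ω.1.1 + ω.2.1) := by
    rw [add_add_add_comm, ZModModule.add_self, zero_add]
  simp only [Prod.mk.injEq, hrot, and_congr_left_iff]
  rintro -
  rw [add_comm ω.1.2 ω.1.1, add_comm ω'.1.2 ω'.1.1, hsum, hsum, and_comm]
  exact and_congr_right fun h => by rw [h, add_right_inj]

theorem le_condEntropy_add_condMutualInfo {Ω γ : Type*} [Fintype Ω] [Fintype γ] {η t : ℝ}
    (hη : 0 ≤ η) (hz : z ∈ stdSimplex ℝ G)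
    (ht : ∀ a ∈ stdSimplex ℝ G, ∀ b ∈ stdSimplex ℝ G, t ≤ pfrFunctional η z a b)
    {μ : Ω → ℝ} (hμ : μ ∈ stdSimplex ℝ Ω) (U V : Ω → G) (S : Ω → γ) :
    t ≤ condEntropy μ (fun ω => U ω + V ω) S + 2 * condMutualInfo μ U V S -
        (entropyOf μ (fun ω => ((U ω, V ω), S ω)) - entropyOf μ fun ω => (U ω + V ω, S ω)) +
      η * (entropy (conv z (law μ U)) + entropy (conv z (law μ V)) - entropy z -
        (entropyOf μ (fun ω => ((U ω, V ω), S ω)) - entropyOf μ fun ω => (U ω + V ω, S ω))) := by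
  have hmin := le_of_le_pfrFunctional hη hz ht hμ U V fun ω => (U ω + V ω, S ω)
  have hbsg := sum_law_mul_entropy_conv_le_add_condMutualInfo hμ
    (U := U) (V := V) (S := S) (C := fun ω => (U ω + V ω, S ω)) fun ω ω' => Prod.mk_inj
  rw [condEntropy_left_add, condEntropy_right_add] at hmin
  linarith

theorem le_fibringInfo_add_of_le_pfrFunctional {η : ℝ} (hη : 0 ≤ η) (hx : x ∈ stdSimplex ℝ G)
    (hy : y ∈ stdSimplex ℝ G) (hz : z ∈ stdSimplex ℝ G) {t : ℝ}
    (ht : ∀ a ∈ stdSimplex ℝ G, ∀ b ∈ stdSimplex ℝ G, t ≤ pfrFunctional η z a b) :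
    t ≤ fibringInfo x y y x + 2 * fibringInfo y y x x +
      η * (fibringInfo y y x x + ruzsaDist z x + ruzsaDist z y + 3 * ruzsaDist x y) := by
  have hxy := prodDist_mem_stdSimplex hx hy
  have hyx := prodDist_mem_stdSimplex hy hx
  have hμ := prodDist_mem_stdSimplex hxy hyx
  let U : (G × G) × G × G → G := fun ω => ω.1.1 + ω.1.2
  let V : (G × G) × G × G → G := fun ω => ω.1.1 + ω.2.1
  let S : (G × G) × G × G → G := fun ω => ω.1.1 + ω.1.2 + (ω.2.1 + ω.2.2)
  have hW : (fun ω => U ω + V ω) = fun ω : (G × G) × G × G => ω.1.2 + ω.2.1 := by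
    funext ω
    simp only [U, V]
    rw [add_add_add_comm, ZModModule.add_self, zero_add]
  have hWS : entropyOf (prodDist (prodDist x y) (prodDist y x)) (fun ω => (U ω + V ω, S ω)) =
      entropy (conv y y) + entropy (conv x x) := by
    rw [← entropyOf_add_pair_rotate hx hy hy hx]
    exact congrArg (fun W : (G × G) × G × G → G => entropyOf _ fun ω => (W ω, S ω)) hW
  have hU : law (prodDist (prodDist x y) (prodDist y x)) U = conv x y :=
    law_prodDist_fst _ hyx fun ω : G × G => ω.1 + ω.2
  have hV : law (prodDist (prodDist x y) (prodDist y x)) V = conv x y := by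
    rw [law_add_prodDist (prodDist x y) (prodDist y x) Prod.fst Prod.fst,
      law_prodDist_fst x hy fun s => s, law_prodDist_fst y hx fun s => s, law_id, law_id]
  have hmin := le_condEntropy_add_condMutualInfo hη hz ht hμ U V S
  have hxy' := entropy_conv_conv_add_le hz hx hy
  have hyx' := entropy_conv_conv_add_le hz hy hx
  have hQ := entropy_conv_conv_swap_le hx hy
  have hI₁ := fibringInfo_eq hx hy hy hx
  have hI₂ := fibringInfo_eq hy hy hx hx
  rw [entropyOf_add_triple_rotate x y y x] at hI₂
  rw [condEntropy, hWS, hU, hV, show entropyOf (prodDist (prodDist x y) (prodDist y x)) S = _ from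
    entropyOf_add_add x y y x] at hmin
  change t ≤ _ + 2 * fibringInfo x y y x - _ + _ at hmin
  refine hmin.trans ?_
  rw [conv_conv_conv_comm y y x x] at hI₂
  rw [conv_comm y x] at *
  refine add_le_add ?_ (mul_le_mul_of_nonneg_left ?_ hη)
  · linarith
  · simp only [ruzsaDist]
    rw [conv_assoc] at hxy' hyx'
    rw [conv_comm y x] at hyx'
    linarith

theorem ruzsaDist_eq_zero_of_pfrFunctional_le (hx : x ∈ stdSimplex ℝ G) (hy : y ∈ stdSimplex ℝ G)
    (hz : z ∈ stdSimplex ℝ G) (hmin : ∀ a ∈ stdSimplex ℝ G, ∀ b ∈ stdSimplex ℝ G,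
      pfrFunctional (1 / 10) z x y ≤ pfrFunctional (1 / 10) z a b) : ruzsaDist x y = 0 := by
  have hη : (0 : ℝ) ≤ 1 / 10 := by norm_num
  have hI₁ := two_mul_add_fibringInfo_le hη hz hmin hx hy hy hx
  have hI₂ := two_mul_add_fibringInfo_le hη hz hmin hy hy hx hx
  have hle := le_fibringInfo_add_of_le_pfrFunctional hη hx hy hz hmin
  have hdiff : fibringInfo y y x x - fibringInfo x y y x =
      ruzsaDist x x + ruzsaDist y y - 2 * ruzsaDist x y := by
    rw [fibringInfo_eq hy hy hx hx, fibringInfo_eq hx hy hy hx,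
      entropyOf_add_triple_rotate x y y x, conv_conv_conv_comm y y x x, conv_comm y x]
    simp only [ruzsaDist]
    ring
  rw [ruzsaDist_comm y x] at hI₁ hI₂
  rw [pfrFunctional] at hI₁ hI₂ hle
  linarith [ruzsaDist_nonneg hx hy]

end Endgame

section Cosets

variable {G : Type*} [AddCommGroup G] [Fintype G] {x y z : G → ℝ}

/-- The uniform distribution on the coset `a + V`. -/
def cosetDist (V : AddSubgroup G) (a t : G) : ℝ := if t - a ∈ V then (Nat.card V : ℝ)⁻¹ else 0

theorem apply_sub_eq_conv_apply (hx : x ∈ stdSimplex ℝ G) (hy : y ∈ stdSimplex ℝ G)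
    (hxy : entropy (conv x y) ≤ entropy x) {b : G} (hb : y b ≠ 0) (w : G) :
    x (w - b) = conv x y w := by
  have hjensen (w : G) : ∑ b, y b • Real.negMulLog (x (w - b)) ≤ Real.negMulLog (conv x y w) := by
    rw [conv_apply]
    exact Real.strictConcaveOn_negMulLog.concaveOn.le_map_sum (fun b _ => hy.1 b) hy.2
      fun b _ => hx.1 _
  have hsum : ∑ w, ∑ b, y b • Real.negMulLog (x (w - b)) = entropy x := by
    have hshift (b : G) : ∑ w, y b • Real.negMulLog (x (w - b)) = y b * entropy x := by
      rw [← smul_sum, smul_eq_mul]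
      exact congrArg _ (Equiv.sum_comp (Equiv.subRight b) fun w => Real.negMulLog (x w))
    rw [sum_comm, sum_congr rfl fun b _ => hshift b, ← sum_mul, hy.2, one_mul]
  have heq : ∑ b, y b • Real.negMulLog (x (w - b)) = Real.negMulLog (conv x y w) :=
    (sum_eq_sum_iff_of_le fun w _ => hjensen w).mp
      (le_antisymm (sum_le_sum fun w _ => hjensen w) (hsum ▸ hxy)) w (mem_univ w)
  rw [conv_apply] at heq ⊢
  exact (Real.strictConcaveOn_negMulLog.map_sum_eq_iff' (fun b _ => hy.1 b) hy.2
    fun b _ => hx.1 _).mp heq.symm b (mem_univ b) hb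

theorem sum_ite_sub_mem (V : AddSubgroup G) (a : G) (F : G → ℝ) :
    ∑ t, (if t - a ∈ V then F t else 0) = ∑ v : V, F (v + a) := by
  rw [← Equiv.sum_comp (Equiv.addRight a)]
  simp only [Equiv.coe_addRight, add_sub_cancel_right]
  rw [← sum_filter, sum_subtype (p := (· ∈ V)) _ (by simp)]

theorem eq_cosetDist_of_forall_sub_mem (hx : x ∈ stdSimplex ℝ G) {V : AddSubgroup G} {a : G} {m : ℝ}
    (hV : ∀ t, x t = if t - a ∈ V then m else 0) : x = cosetDist V a := by
  have hm : Nat.card V * m = 1 := by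
    rw [← hx.2, sum_congr rfl fun t _ => hV t, sum_ite_sub_mem]
    simp
  funext t
  rw [hV, cosetDist, eq_inv_of_mul_eq_one_right hm]

theorem exists_eq_cosetDist_of_ruzsaDist_eq_zero (hx : x ∈ stdSimplex ℝ G) (hy : y ∈ stdSimplex ℝ G)
    (hxy : ruzsaDist x y = 0) : ∃ V a b, x = cosetDist V a ∧ y = cosetDist V b := by
  have hleft := entropy_le_entropy_conv_left hx hy
  have hright := entropy_le_entropy_conv_right hx hy
  rw [ruzsaDist] at hxy
  have hxconv {b : G} (hb : y b ≠ 0) (w : G) : x (w - b) = conv x y w :=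
    apply_sub_eq_conv_apply hx hy (by linarith) hb w
  have hyconv {a : G} (ha : x a ≠ 0) (w : G) : y (w - a) = conv x y w :=
    conv_comm x y ▸ apply_sub_eq_conv_apply hy hx (by rw [conv_comm]; linarith) ha w
  obtain ⟨a, -, ha⟩ := exists_ne_zero_of_sum_ne_zero (hx.2.trans_ne one_ne_zero)
  obtain ⟨b, -, hb⟩ := exists_ne_zero_of_sum_ne_zero (hy.2.trans_ne one_ne_zero)
  have htranslate (w : G) : y w = x (w + a - b) := by
    rw [hxconv hb, ← hyconv ha, add_sub_cancel_right]
  let V : AddSubgroup G :=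
    { carrier := {v | ∀ w, x (w + v) = x w}
      add_mem' := fun {u v} hu hv w => by rw [← add_assoc, hv, hu]
      zero_mem' := fun w => by rw [add_zero]
      neg_mem' := fun {v} hv w => by rw [← hv (w + -v), neg_add_cancel_right] }
  have hV (t : G) : x t = if t - a ∈ V then x a else 0 := by
    split_ifs with ht
    · rw [← ht a, add_sub_cancel]
    · by_contra hne
      refine ht fun w => ?_
      have hshift := (hyconv ha (w + b + t - a)).trans (hyconv hne _).symm
      rw [htranslate, htranslate] at hshift
      convert hshift using 2 <;> abel
  refine ⟨V, a, b, eq_cosetDist_of_forall_sub_mem hx hV,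
    eq_cosetDist_of_forall_sub_mem hy (m := x a) fun t => ?_⟩
  rw [htranslate, hV, add_sub_right_comm, add_sub_cancel_right]

theorem cosetDist_mem_stdSimplex (V : AddSubgroup G) (a : G) : cosetDist V a ∈ stdSimplex ℝ G := by
  refine ⟨fun t => ?_, ?_⟩
  · unfold cosetDist
    positivity
  · simp only [cosetDist, sum_ite_sub_mem V a fun _ => (Nat.card V : ℝ)⁻¹]
    simp

theorem entropy_cosetDist (V : AddSubgroup G) (a : G) :
    entropy (cosetDist V a) = Real.log (Nat.card V) := by
  have hterm (t : G) : Real.negMulLog (cosetDist V a t) =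
      cosetDist V a t * Real.log (Nat.card V) := by
    unfold cosetDist
    split_ifs
    · rw [Real.negMulLog, Real.log_inv, neg_mul_neg]
    · simp
  rw [entropy, sum_congr rfl fun t _ => hterm t, ← sum_mul, (cosetDist_mem_stdSimplex V a).2,
    one_mul]

theorem conv_cosetDist (z : G → ℝ) (V : AddSubgroup G) (a w : G) :
    conv z (cosetDist V a) w = (∑ v : V, z (v + (w - a))) * (Nat.card V : ℝ)⁻¹ := by
  rw [conv_comm, conv_apply, ← sum_ite_sub_mem, sum_mul]
  refine sum_congr rfl fun b _ => ?_
  have hmem : w - b - a ∈ V ↔ b - (w - a) ∈ V := by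
    rw [← neg_mem_iff, show -(w - b - a) = b - (w - a) by abel]
  simp only [cosetDist, hmem, mul_ite, mul_zero, ite_mul, zero_mul]

theorem exists_sub_ruzsaDist_cosetDist_le_log_sum (hz : z ∈ stdSimplex ℝ G) (V : AddSubgroup G)
    (a : G) : ∃ c, 0 < ∑ v : V, z (v + c) ∧
      Real.log (Nat.card V) / 2 - entropy z / 2 - ruzsaDist z (cosetDist V a) ≤
        Real.log (∑ v : V, z (v + c)) := by
  obtain ⟨w, hpos, hw⟩ :=
    exists_neg_entropy_le_log (conv_mem_stdSimplex hz (cosetDist_mem_stdSimplex V a))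
  have hcard : (0 : ℝ) < (Nat.card V : ℝ)⁻¹ := inv_pos.mpr (Nat.cast_pos.mpr Nat.card_pos)
  rw [conv_cosetDist] at hpos hw
  have hsum := pos_of_mul_pos_left hpos hcard.le
  refine ⟨w - a, hsum, ?_⟩
  rw [Real.log_mul hsum.ne' hcard.ne', Real.log_inv] at hw
  rw [ruzsaDist, entropy_cosetDist]
  linarith

/-- An entropic form of the polynomial Freiman–Ruzsa theorem in characteristic two. -/
theorem exists_sub_ruzsaDist_le_log_sum [Module (ZMod 2) G] (hz : z ∈ stdSimplex ℝ G) :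
    ∃ (V : AddSubgroup G) (c : G), 0 < ∑ v : V, z (v + c) ∧
      Real.log (Nat.card V) / 2 - entropy z / 2 - 6 * ruzsaDist z z ≤
        Real.log (∑ v : V, z (v + c)) := by
  obtain ⟨x, hx, y, hy, hmin⟩ := exists_pfrFunctional_le (1 / 10) hz
  have hzero := ruzsaDist_eq_zero_of_pfrFunctional_le hx hy hz hmin
  obtain ⟨V, a, b, rfl, rfl⟩ := exists_eq_cosetDist_of_ruzsaDist_eq_zero hx hy hzero
  have hle := hmin z hz z hz
  simp only [pfrFunctional, hzero] at hle
  rcases le_total (ruzsaDist z (cosetDist V a)) (ruzsaDist z (cosetDist V b)) with hab | hba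
  · obtain ⟨c, hpos, hc⟩ := exists_sub_ruzsaDist_cosetDist_le_log_sum hz V a
    exact ⟨V, c, hpos, by linarith⟩
  · obtain ⟨c, hpos, hc⟩ := exists_sub_ruzsaDist_cosetDist_le_log_sum hz V b
    exact ⟨V, c, hpos, by linarith⟩

end Cosets

section SelfDistance

variable {G Ω : Type*} [AddCommGroup G] [Fintype G] [Fintype Ω]

theorem entropy_conv_law_add_right (x y : G → ℝ) (c : G) :
    entropy (conv x (law y fun s => s + c)) = entropy (conv x y) := by
  have h := law_add_prodDist x y (fun s => s) fun s => s + c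
  rw [law_id] at h
  rw [← h, conv, entropy_law, entropy_law]
  exact entropyOf_congr fun ω ω' _ _ => by
    rw [← add_assoc, ← add_assoc, add_left_inj]

theorem condEntropy_unit {α : Type*} [Fintype α] {μ : Ω → ℝ} (hμ : μ ∈ stdSimplex ℝ Ω) (X : Ω → α) :
    condEntropy μ X (fun _ => ()) = entropyOf μ X := by
  have hpair : entropyOf μ (fun ω => (X ω, ())) = entropyOf μ X :=
    entropyOf_congr fun ω ω' _ _ => by simp
  have hunit : entropyOf μ (fun _ => ()) = 0 := by
    simp [entropyOf_eq_sum, law, hμ.2]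
  rw [condEntropy, hpair, hunit, sub_zero]

variable [Module (ZMod 2) G]

theorem law_condDist_add_right {μ : Ω → ℝ} (U V : Ω → G) (c : G) :
    law (condDist μ (fun ω => U ω + V ω) c) V =
      law (law (condDist μ (fun ω => U ω + V ω) c) U) fun s => s + c := by
  rw [law_law]
  refine law_congr fun ω hω => ?_
  have hc : U ω + V ω = c := by_contra fun h => hω (if_neg h)
  rw [← hc, ← add_assoc, ZModModule.add_self, zero_add]

/-- The entropic Balog–Szemerédi–Gowers theorem in characteristic two. -/
theorem sum_law_mul_ruzsaDist_self_le {μ : Ω → ℝ} (hμ : μ ∈ stdSimplex ℝ Ω) (U V : Ω → G) :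
    ∑ c, law μ (fun ω => U ω + V ω) c *
        ruzsaDist (law (condDist μ (fun ω => U ω + V ω) c) U)
          (law (condDist μ (fun ω => U ω + V ω) c) U) ≤
      2 * (entropyOf μ U + entropyOf μ V + entropyOf μ fun ω => U ω + V ω) -
        3 * entropyOf μ fun ω => (U ω, V ω) := by
  have hbsg := sum_law_mul_entropy_conv_le_add_condMutualInfo hμ (U := U) (V := V)
    (S := fun _ => ()) (C := fun ω => U ω + V ω) fun ω ω' => by simp
  simp only [condMutualInfo, condEntropy_unit hμ, law_condDist_add_right,
    entropy_conv_law_add_right] at hbsg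
  have hcond : condEntropy μ U (fun ω => U ω + V ω) =
      entropyOf μ (fun ω => (U ω, V ω)) - entropyOf μ fun ω => U ω + V ω := by
    rw [condEntropy]
    congr 1
    exact entropyOf_congr fun ω ω' _ _ => by
      simp only [Prod.mk.injEq]
      exact and_congr_right fun h => by rw [h, add_right_inj]
  have hdist (x : G → ℝ) : ruzsaDist x x = entropy (conv x x) - entropy x := by
    rw [ruzsaDist]
    ring
  simp only [hdist, mul_sub, sum_sub_distrib, ← condEntropy_eq_sum hμ, hcond]
  linarith

end SelfDistance

section AdditiveTriples

variable {G : Type*} [AddCommGroup G] [Fintype G]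

/-- The additive energy `∑ p(a) p(b) p(a + b)` of `p`, when `G` has characteristic two. -/
def tripleMass (p : G → ℝ) : ℝ := ∑ x, p x * conv p p x

/-- The law of two independent samples of `p` and their sum, reweighted by the probability that `p`
gives to that sum. -/
def tripleDist (p : G → ℝ) (ω : G × G) : ℝ := p ω.1 * p ω.2 * p (ω.1 + ω.2) / tripleMass p

/-- In characteristic two, the common law of the three entries of a triple `(a, b, a + b)` drawn
from `tripleDist p`. -/
def tripleMarginal (p : G → ℝ) (x : G) : ℝ := p x * conv p p x / tripleMass p

theorem law_tripleDist_add (p : G → ℝ) :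
    law (tripleDist p) (fun ω => ω.1 + ω.2) = tripleMarginal p := by
  funext c
  rw [law, tripleMarginal, mul_comm, conv, law, sum_mul, sum_div]
  exact sum_congr rfl fun ω hω => by rw [tripleDist, prodDist, (mem_filter.mp hω).2]

theorem tripleDist_mem_stdSimplex {p : G → ℝ} (hp : p ∈ stdSimplex ℝ G)
    (hT : 0 < tripleMass p) : tripleDist p ∈ stdSimplex ℝ (G × G) := by
  refine ⟨fun ω => div_nonneg (mul_nonneg (mul_nonneg (hp.1 _) (hp.1 _)) (hp.1 _)) hT.le, ?_⟩
  have h := sum_law_mul (tripleDist p) (fun ω => ω.1 + ω.2) fun _ => 1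
  simp only [mul_one, law_tripleDist_add, tripleMarginal, ← sum_div] at h
  exact h.symm.trans (div_self hT.ne')

theorem tripleMarginal_mem_stdSimplex {p : G → ℝ} (hp : p ∈ stdSimplex ℝ G)
    (hT : 0 < tripleMass p) : tripleMarginal p ∈ stdSimplex ℝ G :=
  law_tripleDist_add p ▸ law_mem_stdSimplex (tripleDist_mem_stdSimplex hp hT) _

theorem entropy_tripleMarginal {p : G → ℝ} (hp : p ∈ stdSimplex ℝ G) (hT : 0 < tripleMass p) :
    entropy (tripleMarginal p) =
      -(∑ x, tripleMarginal p x * Real.log (p x)) -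
        (∑ x, tripleMarginal p x * Real.log (conv p p x)) + Real.log (tripleMass p) := by
  have hlog (x : G) : Real.negMulLog (tripleMarginal p x) =
      -(tripleMarginal p x * Real.log (p x)) - tripleMarginal p x * Real.log (conv p p x) +
        tripleMarginal p x * Real.log (tripleMass p) := by
    rcases eq_or_ne (p x * conv p p x) 0 with hx | hx
    · simp [tripleMarginal, hx]
    · rw [Real.negMulLog, tripleMarginal, Real.log_div hx hT.ne',
        Real.log_mul (left_ne_zero_of_mul hx) (right_ne_zero_of_mul hx)]
      ring
  simp only [entropy, hlog, sum_add_distrib, sum_sub_distrib, sum_neg_distrib, ← sum_mul,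
    (tripleMarginal_mem_stdSimplex hp hT).2, one_mul]

theorem neg_sum_tripleMarginal_mul_log_conv_le {p : G → ℝ} (hp : p ∈ stdSimplex ℝ G)
    (hT : 0 < tripleMass p) :
    -∑ x, tripleMarginal p x * Real.log (conv p p x) ≤ -Real.log (tripleMass p) := by
  have hgibbs := entropy_le_neg_sum_mul_log (tripleMarginal_mem_stdSimplex hp hT) hp
    fun x hx h => hx (by simp [tripleMarginal, h])
  rw [entropy_tripleMarginal hp hT] at hgibbs
  linarith

theorem log_le_neg_sum_tripleMarginal_mul_log {p : G → ℝ} (hp : p ∈ stdSimplex ℝ G)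
    (hT : 0 < tripleMass p) {K : ℝ} (hK : 0 < K) (hKp : ∀ x, K * p x ≤ 1) :
    Real.log K ≤ -∑ x, tripleMarginal p x * Real.log (p x) := by
  have hr := tripleMarginal_mem_stdSimplex hp hT
  rw [← one_mul (Real.log K), ← hr.2, sum_mul, ← sum_neg_distrib]
  refine sum_le_sum fun x _ => ?_
  rcases eq_or_ne (p x) 0 with hx | hx
  · simp [tripleMarginal, hx]
  · have hlog := Real.log_nonpos (mul_nonneg hK.le (hp.1 x)) (hKp x)
    rw [Real.log_mul hK.ne' hx] at hlog
    rw [← mul_neg]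
    exact mul_le_mul_of_nonneg_left (by linarith) (hr.1 x)

/-- The law of `a` for a triple `(a, b, a + b)` drawn from `tripleDist p` and conditioned on
`a + b = c`. -/
def tripleFiber (p : G → ℝ) (c : G) : G → ℝ :=
  law (condDist (tripleDist p) (fun ω => ω.1 + ω.2) c) Prod.fst

theorem tripleFiber_mem_stdSimplex {p : G → ℝ} (hp : p ∈ stdSimplex ℝ G)
    (hT : 0 < tripleMass p) {c : G} (hc : tripleMarginal p c ≠ 0) :
    tripleFiber p c ∈ stdSimplex ℝ G :=
  law_mem_stdSimplex (condDist_mem_stdSimplex (tripleDist_mem_stdSimplex hp hT) _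
    (by rwa [law_tripleDist_add])) _

theorem sum_tripleMarginal_mul_entropy_tripleFiber {p : G → ℝ} (hp : p ∈ stdSimplex ℝ G)
    (hT : 0 < tripleMass p) :
    ∑ c, tripleMarginal p c * entropy (tripleFiber p c) =
      entropy (tripleDist p) - entropy (tripleMarginal p) := by
  have h := condEntropy_eq_sum (tripleDist_mem_stdSimplex hp hT) Prod.fst fun ω => ω.1 + ω.2
  have hpair : entropyOf (tripleDist p) (fun ω => (ω.1, ω.1 + ω.2)) = entropy (tripleDist p) := by
    rw [← entropyOf_id]
    exact entropyOf_congr fun ω ω' _ _ => by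
      simp only [Prod.ext_iff]
      exact and_congr_right fun h => by rw [h, add_right_inj]
  rw [condEntropy, hpair, entropyOf, law_tripleDist_add] at h
  exact h.symm

variable [Module (ZMod 2) G]

theorem law_tripleDist_fst (p : G → ℝ) : law (tripleDist p) Prod.fst = tripleMarginal p := by
  funext s
  simp only [law_eq_sum_ite, Fintype.sum_prod_type, tripleDist, tripleMarginal, conv_apply,
    sum_div, mul_sum, ZModModule.sub_eq_add]
  simp [sum_ite_irrel, mul_assoc]

theorem law_tripleDist_snd (p : G → ℝ) : law (tripleDist p) Prod.snd = tripleMarginal p := by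
  rw [← law_tripleDist_fst]
  funext s
  simp only [law_eq_sum_ite, Fintype.sum_prod_type_right (f := fun ω => ite (ω.2 = s) _ _),
    Fintype.sum_prod_type (f := fun ω => ite (ω.1 = s) _ _), tripleDist]
  exact sum_congr rfl fun a _ => sum_congr rfl fun b _ => by rw [mul_comm (p a), add_comm]

theorem entropy_tripleDist {p : G → ℝ} (hp : p ∈ stdSimplex ℝ G) (hT : 0 < tripleMass p) :
    entropy (tripleDist p) =
      -(3 * ∑ x, tripleMarginal p x * Real.log (p x)) + Real.log (tripleMass p) := by
  have hlog (ω : G × G) : Real.negMulLog (tripleDist p ω) =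
      -(tripleDist p ω * Real.log (p ω.1) + tripleDist p ω * Real.log (p ω.2) +
          tripleDist p ω * Real.log (p (ω.1 + ω.2))) +
        tripleDist p ω * Real.log (tripleMass p) := by
    rcases eq_or_ne (p ω.1 * p ω.2 * p (ω.1 + ω.2)) 0 with hω | hω
    · simp [tripleDist, hω]
    · have hω' := left_ne_zero_of_mul hω
      rw [Real.negMulLog, tripleDist, Real.log_div hω hT.ne',
        Real.log_mul hω' (right_ne_zero_of_mul hω),
        Real.log_mul (left_ne_zero_of_mul hω') (right_ne_zero_of_mul hω')]
      ring
  have hfst := sum_law_mul (tripleDist p) Prod.fst fun x => Real.log (p x)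
  have hsnd := sum_law_mul (tripleDist p) Prod.snd fun x => Real.log (p x)
  have hadd := sum_law_mul (tripleDist p) (fun ω => ω.1 + ω.2) fun x => Real.log (p x)
  rw [law_tripleDist_fst] at hfst
  rw [law_tripleDist_snd] at hsnd
  rw [law_tripleDist_add] at hadd
  simp only [entropy, hlog, sum_add_distrib, sum_neg_distrib, ← sum_mul, ← hfst, ← hsnd, ← hadd,
    (tripleDist_mem_stdSimplex hp hT).2]
  ring

theorem mul_conv_mul_tripleFiber_le {p : G → ℝ} (hp : p ∈ stdSimplex ℝ G)
    (hT : 0 < tripleMass p) {K : ℝ} (hKp : ∀ x, K * p x ≤ 1) {c : G}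
    (hc : tripleMarginal p c ≠ 0) (t : G) :
    K * conv p p c * tripleFiber p c t ≤ p t := by
  have hsupp := (div_ne_zero_iff.mp hc).1
  have hlaw := law_mul_law_condDist (tripleDist_mem_stdSimplex hp hT) (fun ω => ω.1 + ω.2)
    Prod.fst c t
  have hpair : law (tripleDist p) (fun ω => (ω.1, ω.1 + ω.2)) (t, c) = tripleDist p (t, t + c) := by
    have h := law_apply_of_injective (tripleDist p) (fun ω => ω)
      (e := fun ω : G × G => (ω.1, ω.1 + ω.2))
      (fun ω ω' h => by
        obtain ⟨h₁, h₂⟩ := Prod.mk.inj h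
        exact Prod.ext h₁ (by simpa [h₁] using h₂)) (t, t + c)
    simpa [law_id, ← add_assoc, ZModModule.add_self] using h
  have hfiber : conv p p c * tripleFiber p c t = p t * p (t + c) := by
    rw [hpair, law_tripleDist_add, tripleDist, tripleMarginal, ← add_assoc, ZModModule.add_self,
      zero_add, div_mul_eq_mul_div, div_left_inj' hT.ne'] at hlaw
    refine mul_left_cancel₀ (left_ne_zero_of_mul hsupp) ?_
    rw [tripleFiber]
    linarith
  rw [mul_assoc, hfiber, mul_left_comm]
  exact mul_le_of_le_one_right (hp.1 t) (hKp _)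

theorem sum_tripleMarginal_mul_ruzsaDist_tripleFiber_le {p : G → ℝ} (hp : p ∈ stdSimplex ℝ G)
    (hT : 0 < tripleMass p) :
    ∑ c, tripleMarginal p c * ruzsaDist (tripleFiber p c) (tripleFiber p c) ≤
      6 * entropy (tripleMarginal p) - 3 * entropy (tripleDist p) := by
  have h := sum_law_mul_ruzsaDist_self_le (tripleDist_mem_stdSimplex hp hT) Prod.fst Prod.snd
  simp only [entropyOf, law_tripleDist_fst, law_tripleDist_snd, law_tripleDist_add,
    Prod.mk.eta, law_id] at h
  exact h.trans_eq (by ring)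

theorem exists_le_log_conv_sub_ruzsaDist {p : G → ℝ} (hp : p ∈ stdSimplex ℝ G)
    (hT : 0 < tripleMass p) {K : ℝ} (hK : 0 < K) (hKp : ∀ x, K * p x ≤ 1) :
    ∃ c, 0 < tripleMarginal p c ∧ 37 * Real.log (K * tripleMass p) ≤
      3 * Real.log K + 2 * Real.log (conv p p c) - entropy (tripleFiber p c) -
        12 * ruzsaDist (tripleFiber p c) (tripleFiber p c) := by
  have hr := tripleMarginal_mem_stdSimplex hp hT
  refine exists_le_of_le_sum_mul hr ?_
  have hconv := neg_sum_tripleMarginal_mul_log_conv_le hp hT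
  have hlogK := log_le_neg_sum_tripleMarginal_mul_log hp hT hK hKp
  have hdist := sum_tripleMarginal_mul_ruzsaDist_tripleFiber_le hp hT
  rw [Real.log_mul hK.ne' hT.ne']
  simp only [mul_sub, mul_add, sum_sub_distrib, sum_add_distrib, mul_left_comm _ (3 : ℝ),
    mul_left_comm _ (2 : ℝ), mul_left_comm _ (12 : ℝ), ← mul_sum, ← sum_mul, hr.2,
    sum_tripleMarginal_mul_entropy_tripleFiber hp hT]
  rw [entropy_tripleMarginal hp hT, entropy_tripleDist hp hT] at hdist ⊢
  linarith

theorem exists_pow_mul_card_le_sq_sum_coset {p : G → ℝ} (hp : p ∈ stdSimplex ℝ G)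
    (hT : 0 < tripleMass p) {K : ℝ} (hK : 0 < K) (hKp : ∀ x, K * p x ≤ 1) :
    ∃ (V : AddSubgroup G) (a : G),
      (K * tripleMass p) ^ 37 * Nat.card V ≤ K * (∑ v : V, p (v + a)) ^ 2 := by
  obtain ⟨c, hc, hlog⟩ := exists_le_log_conv_sub_ruzsaDist hp hT hK hKp
  obtain ⟨V, a, hpos, hV⟩ :=
    exists_sub_ruzsaDist_le_log_sum (tripleFiber_mem_stdSimplex hp hT hc.ne')
  have hconv : 0 < conv p p c :=
    ((conv_mem_stdSimplex hp hp).1 c).lt_of_ne'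
      (right_ne_zero_of_mul (div_ne_zero_iff.mp hc.ne').1)
  have hfiber : K * conv p p c * ∑ v : V, tripleFiber p c (v + a) ≤ ∑ v : V, p (v + a) := by
    rw [mul_sum]
    exact sum_le_sum fun v _ => mul_conv_mul_tripleFiber_le hp hT hKp hc.ne' _
  have hm := (mul_pos (mul_pos hK hconv) hpos).trans_le hfiber
  have hlogm := Real.log_le_log (mul_pos (mul_pos hK hconv) hpos) hfiber
  rw [Real.log_mul (mul_pos hK hconv).ne' hpos.ne', Real.log_mul hK.ne' hconv.ne'] at hlogm
  have hcard : (0 : ℝ) < Nat.card V := Nat.cast_pos.mpr Nat.card_pos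
  refine ⟨V, a, ?_⟩
  rw [← Real.log_le_log_iff (by positivity) (by positivity),
    Real.log_mul (by positivity) hcard.ne', Real.log_mul hK.ne' (by positivity), Real.log_pow,
    Real.log_pow]
  push_cast
  linarith

end AdditiveTriples

section SignCharacter

/-- The nontrivial character `a ↦ (-1) ^ a` of `𝔽₂`. -/
def signChar : AddChar (ZMod 2) ℝ := AddChar.zmodChar 2 neg_one_sq

theorem signChar_apply (a : ZMod 2) : signChar a = (-1) ^ a.val := rfl

theorem zmod_two_eq_one_of_ne_zero {a : ZMod 2} (ha : a ≠ 0) : a = 1 :=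
  Fin.eq_one_of_ne_zero a ha

theorem signChar_one : signChar 1 = -1 := by
  rw [signChar_apply, ZMod.val_one, pow_one]

theorem signChar_mul_self (a : ZMod 2) : signChar a * signChar a = 1 := by
  rw [← AddChar.map_add_eq_mul, ZModModule.add_self, AddChar.map_zero_eq_one]

theorem signChar_eq_one_iff {a : ZMod 2} : signChar a = 1 ↔ a = 0 := by
  refine ⟨fun h => by_contra fun ha => ?_, fun h => by rw [h, AddChar.map_zero_eq_one]⟩
  rw [zmod_two_eq_one_of_ne_zero ha] at h
  linarith [signChar_one.symm.trans h]

theorem norm_ofReal_signChar (a : ZMod 2) : ‖(signChar a : ℂ)‖ = 1 := by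
  simp [signChar_apply]

theorem signChar_le_one (a : ZMod 2) : signChar a ≤ 1 := by
  rw [signChar_apply]
  exact (le_abs_self _).trans (by simp)

theorem sum_signChar_apply {E : Type*} [AddCommGroup E] [Module (ZMod 2) E] [Fintype E]
    (l : E →ₗ[ZMod 2] ZMod 2) :
    ∑ x, signChar (l x) = if l = 0 then (Fintype.card E : ℝ) else 0 := by
  have h := AddChar.sum_eq_ite (signChar.compAddMonoidHom l.toAddMonoidHom)
  simpa only [AddChar.eq_zero_iff, AddChar.compAddMonoidHom_apply, LinearMap.toAddMonoidHom_coe,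
    signChar_eq_one_iff, LinearMap.ext_iff, LinearMap.zero_apply] using h

end SignCharacter

section SubspaceSums

variable {E : Type*} [AddCommGroup E] [Module (ZMod 2) E] [Fintype E]

theorem sum_submodule_eq_sum_ite (V : Submodule (ZMod 2) E) (F : E → ℝ) :
    ∑ x : V, F x = ∑ x, if x ∈ V then F x else 0 := by
  rw [← sum_filter]
  exact (sum_subtype _ (by simp) F).symm

theorem sum_submodule_add_right (V : Submodule (ZMod 2) E) {a : E} (ha : a ∈ V) (F : E → ℝ) :
    ∑ x : V, F (x + a) = ∑ x : V, F x :=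
  Equiv.sum_comp (Equiv.addRight (⟨a, ha⟩ : V)) fun x => F x

theorem sum_submodule_le_of_le {V W : Submodule (ZMod 2) E} (hVW : V ≤ W) {F : E → ℝ}
    (hF : ∀ x, 0 ≤ F x) : ∑ x : V, F x ≤ ∑ x : W, F x := by
  rw [sum_submodule_eq_sum_ite, sum_submodule_eq_sum_ite]
  refine sum_le_sum fun x _ => ?_
  split_ifs with hV hW hW
  exacts [le_rfl, absurd (hVW hV) hW, hF x, le_rfl]

theorem sum_submodule_eq_sum_inf_ker (V : Submodule (ZMod 2) E) (l : E →ₗ[ZMod 2] ZMod 2) {b : E}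
    (hb : b ∈ V) (hlb : l b = 1) (F : E → ℝ) :
    ∑ x : V, F x =
      ∑ x : ↥(V ⊓ LinearMap.ker l), F x + ∑ x : ↥(V ⊓ LinearMap.ker l), F (x + b) := by
  have hinf (F : E → ℝ) : ∑ x : ↥(V ⊓ LinearMap.ker l), F x =
      ∑ x : V, if l x = 0 then F x else 0 := by
    rw [sum_submodule_eq_sum_ite, sum_submodule_eq_sum_ite V fun x => if l x = 0 then F x else 0]
    simp only [Submodule.mem_inf, LinearMap.mem_ker, ite_and]
  rw [hinf, hinf fun x => F (x + b),
    ← sum_submodule_add_right V hb fun x => if l x = 0 then F (x + b) else 0, ← sum_add_distrib]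
  refine sum_congr rfl fun x _ => ?_
  simp only [map_add, hlb, add_assoc, ZModModule.add_self, add_zero]
  by_cases h : l x = 0
  · simp [h]
  · simp [zmod_two_eq_one_of_ne_zero h, CharTwo.add_self_eq_zero]

end SubspaceSums

section FourierNonneg

variable {E : Type*} [AddCommGroup E] [Module (ZMod 2) E] [Fintype E]

/-- The Fourier transform of `g` with respect to the pairing `(-1) ^ B x y`. -/
def bilinFourier (B : LinearMap.BilinForm (ZMod 2) E) (g : E → ℝ) (x : E) : ℝ :=
  ∑ y, g y * signChar (B x y)

theorem sum_submodule_bilinFourier_add_le (B : LinearMap.BilinForm (ZMod 2) E) {g : E → ℝ}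
    (hg : ∀ y, 0 ≤ g y) (V : Submodule (ZMod 2) E) (a : E) :
    ∑ x : V, bilinFourier B g (x + a) ≤ ∑ x : V, bilinFourier B g x := by
  have hnonneg (y : E) : 0 ≤ ∑ x : V, signChar (B x y) := by
    refine (sum_signChar_apply ((B.flip y).comp V.subtype)).symm.subst ?_
    split_ifs <;> positivity
  simp only [bilinFourier, map_add, LinearMap.add_apply, AddChar.map_add_eq_mul]
  rw [sum_comm, sum_comm (s := univ (α := V))]
  refine sum_le_sum fun y _ => ?_
  simp only [← mul_sum, ← sum_mul]
  exact mul_le_mul_of_nonneg_left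
    (mul_le_of_le_one_right (hnonneg y) (signChar_le_one _)) (hg y)

theorem card_mul_sum_submodule_bilinFourier_le (B : LinearMap.BilinForm (ZMod 2) E) {g : E → ℝ}
    (hg : ∀ y, 0 ≤ g y) {I V : Submodule (ZMod 2) E} (hIV : I ≤ V) :
    Nat.card I * ∑ x : V, bilinFourier B g x ≤ Nat.card V * ∑ x : I, bilinFourier B g x := by
  calc Nat.card I * ∑ x : V, bilinFourier B g x
      = ∑ y : I, ∑ x : V, bilinFourier B g (x + y) := by
        simp only [sum_submodule_add_right V (hIV (Subtype.coe_prop _)) (bilinFourier B g)]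
        simp
    _ = ∑ x : V, ∑ y : I, bilinFourier B g (y + x) := by
        rw [sum_comm]
        simp only [add_comm]
    _ ≤ ∑ _x : V, ∑ y : I, bilinFourier B g y :=
        sum_le_sum fun x _ => sum_submodule_bilinFourier_add_le B hg I x
    _ = Nat.card V * ∑ x : I, bilinFourier B g x := by simp

end FourierNonneg

section Reflections

variable {𝕜 H : Type*} [RCLike 𝕜] [NormedAddCommGroup H] [InnerProductSpace 𝕜 H]

theorem norm_add_map_sq_add_norm_sub_map_sq (M : H →ₗᵢ[𝕜] H) (u : H) :
    ‖u + M u‖ ^ 2 + ‖u - M u‖ ^ 2 = 4 * ‖u‖ ^ 2 := by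
  have h := parallelogram_law_with_norm 𝕜 u (M u)
  rw [M.norm_map] at h
  linarith

theorem norm_inner_sq_add_norm_inner_sq_of_commute {M A : H →ₗᵢ[𝕜] H} (hM : ∀ u, M (M u) = u)
    (hAM : ∀ u, A (M u) = M (A u)) (φ ψ : H) :
    ‖inner 𝕜 (φ + M φ) (A (ψ + M ψ))‖ ^ 2 + ‖inner 𝕜 (φ - M φ) (A (ψ - M ψ))‖ ^ 2 =
      8 * (‖inner 𝕜 φ (A ψ)‖ ^ 2 + ‖inner 𝕜 φ (A (M ψ))‖ ^ 2) := by
  have hMM : inner 𝕜 (M φ) (A (M ψ)) = inner 𝕜 φ (A ψ) := by rw [hAM, M.inner_map_map]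
  have hM1 : inner 𝕜 (M φ) (A ψ) = inner 𝕜 φ (A (M ψ)) := by
    rw [hAM, ← M.inner_map_map φ, hM]
  have hplus : inner 𝕜 (φ + M φ) (A (ψ + M ψ)) =
      2 * (inner 𝕜 φ (A ψ) + inner 𝕜 φ (A (M ψ))) := by
    rw [map_add, inner_add_left, inner_add_right, inner_add_right, hMM, hM1]
    ring
  have hminus : inner 𝕜 (φ - M φ) (A (ψ - M ψ)) =
      2 * (inner 𝕜 φ (A ψ) - inner 𝕜 φ (A (M ψ))) := by
    rw [map_sub, inner_sub_left, inner_sub_right, inner_sub_right, hMM, hM1]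
    ring
  have h := parallelogram_law_with_norm 𝕜 (inner 𝕜 φ (A ψ)) (inner 𝕜 φ (A (M ψ)))
  rw [hplus, hminus, norm_mul, norm_mul, RCLike.norm_two]
  linarith

end Reflections

section WeylSystems

variable {E H : Type*} [AddCommGroup E] [Module (ZMod 2) E] [NormedAddCommGroup H]
  [InnerProductSpace ℂ H]

/-- A projective unitary representation `W` of `E` on `H` whose commutators are the signs
`(-1) ^ B x y`: the abstract form of the Weyl operators. -/
structure IsWeylSystem (B : LinearMap.BilinForm (ZMod 2) E) (W : E → H →ₗᵢ[ℂ] H) : Prop where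
  apply_apply : ∀ x y, ∃ c : ℂ, ‖c‖ = 1 ∧ ∀ u, W x (W y u) = c • W (x + y) u
  apply_comm : ∀ x y u, W x (W y u) = (signChar (B x y) : ℂ) • W y (W x u)

variable {B : LinearMap.BilinForm (ZMod 2) E} {W : E → H →ₗᵢ[ℂ] H}

theorem IsWeylSystem.norm_inner_apply_apply (hW : IsWeylSystem B W) (x y : E) (φ ψ : H) :
    ‖inner ℂ φ (W x (W y ψ))‖ = ‖inner ℂ φ (W (x + y) ψ)‖ := by
  obtain ⟨c, hc, h⟩ := hW.apply_apply x y
  rw [h, inner_smul_right, norm_mul, hc, one_mul]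

theorem IsWeylSystem.exists_apply_apply_self (hW : IsWeylSystem B W) (a : E) :
    ∃ c : ℂ, ‖c‖ = 1 ∧ ∀ u, W a (W a u) = c • u := by
  obtain ⟨c, hc, h⟩ := hW.apply_apply a a
  obtain ⟨d, hd, h0⟩ := hW.apply_apply 0 0
  have hzero (u : H) : W 0 u = d • u :=
    (W 0).injective (by rw [h0, add_zero, map_smul])
  refine ⟨c * d, by rw [norm_mul, hc, hd, one_mul], fun u => ?_⟩
  rw [h, ZModModule.add_self, hzero, smul_smul]

theorem IsWeylSystem.exists_involutive_smul (hW : IsWeylSystem B W) (a : E) :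
    ∃ (M : H →ₗᵢ[ℂ] H) (ω : ℂ), ‖ω‖ = 1 ∧ (∀ u, M u = ω • W a u) ∧ ∀ u, M (M u) = u := by
  obtain ⟨c, hc, h⟩ := hW.exists_apply_apply_self a
  obtain ⟨ω, hω⟩ := IsAlgClosed.exists_pow_nat_eq c⁻¹ two_pos
  have hnorm : ‖ω‖ = 1 := by
    rw [← pow_eq_one_iff_of_nonneg (norm_nonneg ω) two_ne_zero, ← norm_pow, hω, norm_inv, hc,
      inv_one]
  refine ⟨⟨ω • (W a).toLinearMap, fun u => ?_⟩, ω, hnorm, fun u => rfl, fun u => ?_⟩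
  · rw [LinearMap.smul_apply, norm_smul, hnorm, one_mul]
    exact (W a).norm_map u
  · change ω • W a (ω • W a u) = u
    rw [map_smul, h, smul_smul, smul_smul, ← sq, hω, inv_mul_cancel₀, one_smul]
    exact norm_ne_zero_iff.mp (hc.trans_ne one_ne_zero)

variable [Fintype E]

theorem IsWeylSystem.mul_sum_sq_norm_inner_le (hW : IsWeylSystem B W) {V : Submodule (ZMod 2) E}
    {a : E} (ha : a ∈ V) (hVa : ∀ x ∈ V, B x a = 0) {C : ℝ}
    (hC : ∀ φ ψ : H, ∑ x : V, ‖inner ℂ φ (W x ψ)‖ ^ 2 ≤ C * (‖φ‖ ^ 2 * ‖ψ‖ ^ 2))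
    {M : H →ₗᵢ[ℂ] H} {ω : ℂ} (hω : ‖ω‖ = 1) (hMω : ∀ u, M u = ω • W a u)
    (hM : ∀ u, M (M u) = u) (φ ψ : H) :
    16 * ∑ x : V, ‖inner ℂ φ (W x ψ)‖ ^ 2 ≤
      C * (‖φ + M φ‖ ^ 2 * ‖ψ + M ψ‖ ^ 2) + C * (‖φ - M φ‖ ^ 2 * ‖ψ - M ψ‖ ^ 2) := by
  have hcomm (x : V) (u : H) : W x (M u) = M (W x u) := by
    rw [hMω, hMω, map_smul, hW.apply_comm, hVa x x.2, AddChar.map_zero_eq_one, Complex.ofReal_one,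
      one_smul]
  have hshift : ∑ x : V, ‖inner ℂ φ (W x (M ψ))‖ ^ 2 = ∑ x : V, ‖inner ℂ φ (W x ψ)‖ ^ 2 := by
    rw [← sum_submodule_add_right V ha fun x => ‖inner ℂ φ (W x ψ)‖ ^ 2]
    refine sum_congr rfl fun x _ => ?_
    rw [hMω, map_smul, inner_smul_right, norm_mul, hω, one_mul, hW.norm_inner_apply_apply]
  refine le_of_eq_of_le ?_ (add_le_add (hC (φ + M φ) (ψ + M ψ)) (hC (φ - M φ) (ψ - M ψ)))
  simp only [← sum_add_distrib, norm_inner_sq_add_norm_inner_sq_of_commute hM (hcomm _), ← mul_sum]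
  rw [sum_add_distrib, hshift]
  ring

/-- The bound is invariant under `V ↦ V ∩ a^⊥` because `W a`, suitably rescaled, is a reflection
that commutes with `W x` for `x ∈ V ∩ a^⊥` and whose eigenspaces are exchanged by `W b` for
`b ∉ a^⊥`. -/
theorem IsWeylSystem.sum_sq_norm_inner_le_of_inf_ker (hW : IsWeylSystem B W) (hB : B.IsAlt)
    {V : Submodule (ZMod 2) E} {a b : E} (ha : a ∈ V) (hb : b ∈ V) (hab : B a b = 1) {C : ℝ}
    (hC : ∀ φ ψ : H, ∑ x : ↥(V ⊓ LinearMap.ker (B a)), ‖inner ℂ φ (W x ψ)‖ ^ 2 ≤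
      C * (‖φ‖ ^ 2 * ‖ψ‖ ^ 2)) (φ ψ : H) :
    ∑ x : V, ‖inner ℂ φ (W x ψ)‖ ^ 2 ≤ C * (‖φ‖ ^ 2 * ‖ψ‖ ^ 2) := by
  obtain ⟨M, ω, hω, hMω, hM⟩ := hW.exists_involutive_smul a
  have hbound := hW.mul_sum_sq_norm_inner_le (V := V ⊓ LinearMap.ker (B a)) ⟨ha, hB a⟩
    (fun x hx => hB.isRefl a x hx.2) hC hω hMω hM φ
  have hanti (u : H) : M (W b u) = -W b (M u) := by
    rw [hMω, hMω, hW.apply_comm, hab, signChar_one, map_smul]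
    simp
  have hψ := hbound ψ
  have hbψ := hbound (W b ψ)
  rw [hanti, sub_neg_eq_add, ← sub_eq_add_neg, ← map_sub, ← map_add, (W b).norm_map,
    (W b).norm_map] at hbψ
  simp only [hW.norm_inner_apply_apply] at hbψ
  have hsplit := sum_submodule_eq_sum_inf_ker V (B a) hb hab fun x => ‖inner ℂ φ (W x ψ)‖ ^ 2
  rw [hsplit]
  have hφφ := norm_add_map_sq_add_norm_sub_map_sq M φ
  have hψψ := norm_add_map_sq_add_norm_sub_map_sq M ψ
  have hprod : C * ((‖φ + M φ‖ ^ 2 + ‖φ - M φ‖ ^ 2) * (‖ψ + M ψ‖ ^ 2 + ‖ψ - M ψ‖ ^ 2)) =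
      16 * (C * (‖φ‖ ^ 2 * ‖ψ‖ ^ 2)) := by
    rw [hφφ, hψψ]
    ring
  linarith

theorem IsWeylSystem.exists_isotropic_sum_sq_norm_inner_le (hW : IsWeylSystem B W) (hB : B.IsAlt)
    (V : Submodule (ZMod 2) E) :
    ∃ I ≤ V, (∀ x ∈ I, ∀ y ∈ I, B x y = 0) ∧
      ∀ φ ψ : H, ∑ x : V, ‖inner ℂ φ (W x ψ)‖ ^ 2 ≤ Nat.card I * (‖φ‖ ^ 2 * ‖ψ‖ ^ 2) := by
  induction V using WellFoundedLT.induction with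
  | ind V ih =>
  by_cases hV : ∀ x ∈ V, ∀ y ∈ V, B x y = 0
  · refine ⟨V, le_rfl, hV, fun φ ψ => ?_⟩
    have hle (x : V) : ‖inner ℂ φ (W x ψ)‖ ^ 2 ≤ ‖φ‖ ^ 2 * ‖ψ‖ ^ 2 := by
      rw [← mul_pow, ← (W x).norm_map ψ]
      exact pow_le_pow_left₀ (norm_nonneg _) (norm_inner_le_norm _ _) 2
    exact (sum_le_sum fun x _ => hle x).trans_eq (by simp)
  · push Not at hV
    obtain ⟨a, ha, b, hb, hab⟩ := hV
    have hlt : V ⊓ LinearMap.ker (B a) < V := inf_le_left.lt_of_not_ge fun h => hab (h hb).2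
    obtain ⟨I, hIV, hI, hbound⟩ := ih _ hlt
    exact ⟨I, hIV.trans inf_le_left, hI, hW.sum_sq_norm_inner_le_of_inf_ker hB ha hb
      (zmod_two_eq_one_of_ne_zero hab) hbound⟩

end WeylSystems

section Lagrangian

open Module

variable {K E : Type*} [Field K] [AddCommGroup E] [Module K E] [FiniteDimensional K E]
  {B : LinearMap.BilinForm K E}

theorem exists_isotropic_ge_orthogonal_le (hB : B.IsAlt) {I : Submodule K E}
    (hI : ∀ x ∈ I, ∀ y ∈ I, B x y = 0) :
    ∃ L ≥ I, (∀ x ∈ L, ∀ y ∈ L, B x y = 0) ∧ B.orthogonal L ≤ L := by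
  obtain ⟨L, hIL, hL⟩ := exists_maximal_ge_of_wellFoundedGT
    (fun L : Submodule K E => ∀ x ∈ L, ∀ y ∈ L, B x y = 0) I hI
  refine ⟨L, hIL, hL.prop, fun z hz => ?_⟩
  have hLz : ∀ x ∈ L, B x z = 0 := LinearMap.BilinForm.mem_orthogonal_iff.mp hz
  have hiso : ∀ x ∈ L ⊔ K ∙ z, ∀ y ∈ L ⊔ K ∙ z, B x y = 0 := by
    simp only [Submodule.mem_sup, Submodule.mem_span_singleton]
    rintro _ ⟨x, hx, _, ⟨c, rfl⟩, rfl⟩ _ ⟨y, hy, _, ⟨d, rfl⟩, rfl⟩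
    simp [hL.prop x hx y hy, hLz x hx, hB.isRefl _ _ (hLz y hy), hB.self_eq_zero]
  exact hL.le_of_ge hiso le_sup_left
    (Submodule.mem_sup_right (Submodule.mem_span_singleton_self z))

theorem exists_isotropic_ge_two_mul_finrank_eq (hB : B.IsAlt) (hnd : B.Nondegenerate)
    {I : Submodule K E} (hI : ∀ x ∈ I, ∀ y ∈ I, B x y = 0) :
    ∃ L ≥ I, (∀ x ∈ L, ∀ y ∈ L, B x y = 0) ∧ 2 * finrank K L = finrank K E := by
  obtain ⟨L, hIL, hL, horth⟩ := exists_isotropic_ge_orthogonal_le hB hI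
  have hself : B.orthogonal L = L := le_antisymm horth fun y hy =>
    LinearMap.BilinForm.mem_orthogonal_iff.mpr fun x hx => hL x hx y hy
  have hfinrank := LinearMap.BilinForm.finrank_orthogonal hnd L
  rw [hself] at hfinrank
  have hle := L.finrank_le
  exact ⟨L, hIL, hL, by omega⟩

end Lagrangian

section SymplecticForm

/-- The phase space `𝔽₂²ⁿ` of `n` qubits, whose elements are pairs of a shift and a frequency. -/
abbrev PhaseSpace (n : ℕ) : Type := (Fin n → ZMod 2) × (Fin n → ZMod 2)

/-- The symplectic product on `𝔽₂²ⁿ` as a bilinear form. -/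
def symplForm (n : ℕ) : LinearMap.BilinForm (ZMod 2) (PhaseSpace n) :=
  (dotProductBilin (ZMod 2) (ZMod 2)).compl₁₂ (.fst _ _ _) (.snd _ _ _) +
    (dotProductBilin (ZMod 2) (ZMod 2)).compl₁₂ (.snd _ _ _) (.fst _ _ _)

variable {n : ℕ}

theorem symplForm_apply (x y : PhaseSpace n) : symplForm n x y = x.1 ⬝ᵥ y.2 + x.2 ⬝ᵥ y.1 := rfl

theorem isAlt_symplForm : (symplForm n).IsAlt := fun x => by
  rw [symplForm_apply, dotProduct_comm, ZModModule.add_self]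

theorem nondegenerate_symplForm : (symplForm n).Nondegenerate := by
  refine isAlt_symplForm.isRefl.nondegenerate_iff_separatingLeft.mpr fun x hx => ?_
  refine Prod.ext (dotProduct_eq_zero _ fun w => ?_) (dotProduct_eq_zero _ fun w => ?_)
  · simpa [symplForm_apply] using hx (0, w)
  · simpa [symplForm_apply] using hx (w, 0)

theorem exists_isLagrangian_ge {I : Submodule (ZMod 2) (PhaseSpace n)}
    (hI : ∀ x ∈ I, ∀ y ∈ I, symplForm n x y = 0) : ∃ L ≥ I, IsLagrangian n L := by
  obtain ⟨L, hIL, hL, hfinrank⟩ :=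
    exists_isotropic_ge_two_mul_finrank_eq isAlt_symplForm nondegenerate_symplForm hI
  rw [Module.finrank_prod, Module.finrank_fin_fun, ← two_mul] at hfinrank
  exact ⟨L, hIL, Nat.eq_of_mul_eq_mul_left two_pos hfinrank, hL⟩

end SymplecticForm

section WeylOperators

open scoped ComplexConjugate

variable {n : ℕ}

/-- The Weyl operator of `y` on the Hilbert space of `n` qubits: a shift by `y.1` followed by a
modulation by `y.2`. -/
def weylOp (y : PhaseSpace n) :
    EuclideanSpace ℂ (Fin n → ZMod 2) →ₗᵢ[ℂ] EuclideanSpace ℂ (Fin n → ZMod 2) where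
  toFun u := WithLp.toLp 2 fun x => (signChar (y.2 ⬝ᵥ x) : ℂ) * u (x + y.1)
  map_add' u v := by
    ext x
    simp [mul_add]
  map_smul' c u := by
    ext x
    simp [mul_left_comm]
  norm_map' u := by
    simp only [LinearMap.coe_mk, AddHom.coe_mk, EuclideanSpace.norm_eq, norm_mul,
      norm_ofReal_signChar, one_mul]
    exact congrArg Real.sqrt (Equiv.sum_comp (Equiv.addRight y.1) fun x => ‖u x‖ ^ 2)

theorem weylOp_apply (y : PhaseSpace n) (u : EuclideanSpace ℂ (Fin n → ZMod 2))
    (x : Fin n → ZMod 2) : weylOp y u x = signChar (y.2 ⬝ᵥ x) * u (x + y.1) := rfl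

theorem weylOp_weylOp (x y : PhaseSpace n) (u : EuclideanSpace ℂ (Fin n → ZMod 2)) :
    weylOp x (weylOp y u) = (signChar (y.2 ⬝ᵥ x.1) : ℂ) • weylOp (x + y) u := by
  ext z
  simp only [weylOp_apply, PiLp.smul_apply, smul_eq_mul, Prod.fst_add, Prod.snd_add,
    dotProduct_add, add_dotProduct, AddChar.map_add_eq_mul, Complex.ofReal_mul, add_assoc]
  ring

theorem isWeylSystem_weylOp : IsWeylSystem (symplForm n) weylOp where
  apply_apply x y := ⟨_, norm_ofReal_signChar _, weylOp_weylOp x y⟩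
  apply_comm x y u := by
    rw [weylOp_weylOp, weylOp_weylOp, smul_smul, add_comm x y, ← Complex.ofReal_mul,
      ← AddChar.map_add_eq_mul, symplForm_apply, add_assoc, ZModModule.add_self, add_zero,
      dotProduct_comm, add_comm y x]

theorem inner_weylOp (φ ψ : EuclideanSpace ℂ (Fin n → ZMod 2)) (y : PhaseSpace n) :
    inner ℂ φ (weylOp y ψ) = ∑ x, signChar (y.2 ⬝ᵥ x) * (ψ (x + y.1) * conj (φ x)) := by
  simp only [PiLp.inner_apply, RCLike.inner_apply, weylOp_apply, mul_assoc]

theorem charDist_eq_inner_weylOp (f : (Fin n → ZMod 2) → ℂ) (y : PhaseSpace n) :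
    charDist n f y = ((2 : ℝ) ^ n)⁻¹ *
      ‖inner ℂ (WithLp.toLp 2 f) (weylOp y (WithLp.toLp 2 f))‖ ^ 2 := by
  rw [norm_inner_symm, charDist, PiLp.inner_apply]
  congr 3
  refine sum_congr rfl fun x _ => ?_
  simp only [RCLike.inner_apply, weylOp_apply, map_mul, Complex.conj_ofReal, signChar_apply]
  push_cast [dotProduct]
  ring

end WeylOperators

section MoyalIdentity

open scoped ComplexConjugate

theorem sum_mul_sum_signChar_mul {E : Type*} [AddCommGroup E] [Module (ZMod 2) E] [Fintype E]
    {B : LinearMap.BilinForm (ZMod 2) E} (hB : B.SeparatingRight) (F G : E → ℂ) :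
    ∑ w, (∑ x, signChar (B w x) * F x) * ∑ x, signChar (B w x) * G x =
      Fintype.card E * ∑ x, F x * G x := by
  have horth (x y : E) : ∑ w, (signChar (B w x) * signChar (B w y) : ℂ) =
      if x = y then (Fintype.card E : ℂ) else 0 := by
    have hflip : LinearMap.flip B x + LinearMap.flip B y = 0 ↔ x = y := by
      rw [← ZModModule.sub_eq_add, sub_eq_zero]
      exact (LinearMap.ker_eq_bot.mp
        (LinearMap.separatingRight_iff_flip_ker_eq_bot.mp hB)).eq_iff
    have h : ∑ w, signChar (B w x + B w y) = _ :=
      sum_signChar_apply (LinearMap.flip B x + LinearMap.flip B y)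
    simpa only [AddChar.map_add_eq_mul, hflip, Complex.ofReal_sum, Complex.ofReal_mul,
      apply_ite Complex.ofReal, Complex.ofReal_natCast, Complex.ofReal_zero]
      using congrArg Complex.ofReal h
  calc ∑ w, (∑ x, signChar (B w x) * F x) * ∑ x, signChar (B w x) * G x
      = ∑ x, ∑ y, (∑ w, (signChar (B w x) * signChar (B w y) : ℂ)) * (F x * G y) := by
        simp only [sum_mul, mul_sum, mul_mul_mul_comm]
        rw [sum_comm_cycle]
        exact sum_congr rfl fun x _ => sum_comm
    _ = Fintype.card E * ∑ x, F x * G x := by simp [horth, mul_sum]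

variable {n : ℕ}

theorem sum_inner_weylOp_mul_conj (φ₁ ψ₁ φ₂ ψ₂ : EuclideanSpace ℂ (Fin n → ZMod 2)) :
    ∑ y, inner ℂ φ₁ (weylOp y ψ₁) * conj (inner ℂ φ₂ (weylOp y ψ₂)) =
      2 ^ n * (inner ℂ φ₁ φ₂ * inner ℂ ψ₂ ψ₁) := by
  have hsep : (dotProductBilin (ZMod 2) (ZMod 2) :
      LinearMap.BilinForm (ZMod 2) (Fin n → ZMod 2)).SeparatingRight := fun x hx =>
    dotProduct_eq_zero x fun w => (dotProduct_comm x w).trans (hx w)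
  have hparseval (v : Fin n → ZMod 2) :
      ∑ w, inner ℂ φ₁ (weylOp (v, w) ψ₁) * conj (inner ℂ φ₂ (weylOp (v, w) ψ₂)) =
      2 ^ n * ∑ x, (ψ₁ (x + v) * conj (φ₁ x)) * (conj (ψ₂ (x + v)) * φ₂ x) := by
    have h := sum_mul_sum_signChar_mul hsep (fun x => ψ₁ (x + v) * conj (φ₁ x))
      fun x => conj (ψ₂ (x + v)) * φ₂ x
    simpa [inner_weylOp, map_sum] using h
  rw [Fintype.sum_prod_type]
  simp only [hparseval, ← mul_sum]
  rw [sum_comm, PiLp.inner_apply, PiLp.inner_apply, sum_mul_sum]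
  congr 1
  refine sum_congr rfl fun x _ => ?_
  rw [← Equiv.sum_comp (Equiv.addLeft x) fun v => _ * inner ℂ (ψ₂ v) (ψ₁ v)]
  refine sum_congr rfl fun v _ => ?_
  simp only [RCLike.inner_apply, Equiv.coe_addLeft]
  ring

theorem sum_sq_norm_inner_weylOp_mul_signChar (ψ : EuclideanSpace ℂ (Fin n → ZMod 2))
    (x : PhaseSpace n) :
    ∑ y, ‖inner ℂ ψ (weylOp y ψ)‖ ^ 2 * signChar (symplForm n x y) =
      2 ^ n * ‖inner ℂ ψ (weylOp x ψ)‖ ^ 2 := by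
  have hconj (y : PhaseSpace n) : inner ℂ ψ (weylOp y ψ) =
      signChar (symplForm n x y) * inner ℂ (weylOp x ψ) (weylOp y (weylOp x ψ)) := by
    rw [← inner_smul_right, ← isWeylSystem_weylOp.apply_comm, LinearIsometry.inner_map_map]
  have hterm (y : PhaseSpace n) :
      ((‖inner ℂ ψ (weylOp y ψ)‖ ^ 2 * signChar (symplForm n x y) : ℝ) : ℂ) =
        inner ℂ (weylOp x ψ) (weylOp y (weylOp x ψ)) * conj (inner ℂ ψ (weylOp y ψ)) := by
    have hsq : (signChar (symplForm n x y) * signChar (symplForm n x y) : ℂ) = 1 := by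
      exact_mod_cast signChar_mul_self _
    rw [Complex.ofReal_mul, Complex.ofReal_pow, ← Complex.mul_conj']
    nth_rewrite 1 [hconj]
    linear_combination
      inner ℂ (weylOp x ψ) (weylOp y (weylOp x ψ)) * conj (inner ℂ ψ (weylOp y ψ)) * hsq
  apply Complex.ofReal_injective
  rw [Complex.ofReal_sum, sum_congr rfl fun y _ => hterm y, sum_inner_weylOp_mul_conj,
    ← inner_conj_symm, Complex.conj_mul']
  push_cast
  rfl

end MoyalIdentity

section CharacteristicDistribution

open scoped ComplexConjugate

variable {n : ℕ} {f : (Fin n → ZMod 2) → ℂ}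

theorem charDist_nonneg (x : PhaseSpace n) : 0 ≤ charDist n f x := by
  rw [charDist]
  positivity

theorem sum_charDist_mul_signChar (x : PhaseSpace n) :
    ∑ y, charDist n f y * signChar (symplForm n x y) = 2 ^ n * charDist n f x := by
  simp only [charDist_eq_inner_weylOp, mul_assoc, ← mul_sum,
    sum_sq_norm_inner_weylOp_mul_signChar]
  ring

theorem bilinFourier_charDist :
    bilinFourier (symplForm n) (fun x => ((2 : ℝ) ^ n)⁻¹ * charDist n f x) = charDist n f := by
  funext x
  simp only [bilinFourier, mul_assoc, ← mul_sum, sum_charDist_mul_signChar]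
  exact inv_mul_cancel_left₀ (by positivity) _

variable (hf : ∑ x, ‖f x‖ ^ 2 = 1)
include hf

theorem two_pow_mul_charDist_zero : 2 ^ n * charDist n f 0 = 1 := by
  have hsum : ∑ x, f x * conj (f x) = 1 := by
    simp only [Complex.mul_conj']
    exact_mod_cast hf
  rw [charDist, mul_inv_cancel_left₀ (by positivity)]
  simp [hsum]

theorem charDist_mem_stdSimplex : charDist n f ∈ stdSimplex ℝ (PhaseSpace n) := by
  refine ⟨charDist_nonneg, ?_⟩
  rw [← two_pow_mul_charDist_zero hf, ← sum_charDist_mul_signChar]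
  simp

theorem two_pow_mul_charDist_le_one (x : PhaseSpace n) : 2 ^ n * charDist n f x ≤ 1 := by
  rw [← sum_charDist_mul_signChar, ← (charDist_mem_stdSimplex hf).2]
  exact sum_le_sum fun y _ => mul_le_of_le_one_right (charDist_nonneg y) (signChar_le_one _)

end CharacteristicDistribution

section LagrangianMass

variable {n : ℕ} {f : (Fin n → ZMod 2) → ℂ}

theorem exists_isotropic_two_pow_mul_sum_charDist_le (hf : ∑ x, ‖f x‖ ^ 2 = 1)
    (V : Submodule (ZMod 2) (PhaseSpace n)) :
    ∃ I ≤ V, (∀ x ∈ I, ∀ y ∈ I, symplForm n x y = 0) ∧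
      2 ^ n * ∑ x : V, charDist n f x ≤ Nat.card I := by
  obtain ⟨I, hIV, hI, hbound⟩ :=
    isWeylSystem_weylOp.exists_isotropic_sum_sq_norm_inner_le isAlt_symplForm V
  refine ⟨I, hIV, hI, ?_⟩
  have hnorm : ‖(WithLp.toLp 2 f : EuclideanSpace ℂ (Fin n → ZMod 2))‖ ^ 2 = 1 := by
    rw [EuclideanSpace.norm_sq_eq, ← hf]
  have hsum := hbound (WithLp.toLp 2 f) (WithLp.toLp 2 f)
  rw [hnorm, mul_one, mul_one] at hsum
  simp only [charDist_eq_inner_weylOp, ← mul_sum]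
  rwa [mul_inv_cancel_left₀ (by positivity)]

theorem exists_isLagrangian_two_pow_mul_sq_sum_coset_le (hf : ∑ x, ‖f x‖ ^ 2 = 1)
    (V : Submodule (ZMod 2) (PhaseSpace n)) (a : PhaseSpace n) :
    ∃ L, IsLagrangian n L ∧
      2 ^ n * (∑ x : V, charDist n f (x + a)) ^ 2 ≤ Nat.card V * ∑ x : L, charDist n f x := by
  obtain ⟨I, hIV, hI, hcard⟩ := exists_isotropic_two_pow_mul_sum_charDist_le hf V
  obtain ⟨L, hIL, hL⟩ := exists_isLagrangian_ge hI
  have hg (y : PhaseSpace n) : 0 ≤ ((2 : ℝ) ^ n)⁻¹ * charDist n f y :=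
    mul_nonneg (by positivity) (charDist_nonneg y)
  have hcoset := sum_submodule_bilinFourier_add_le (symplForm n) hg V a
  have hdensity := card_mul_sum_submodule_bilinFourier_le (symplForm n) hg hIV
  rw [bilinFourier_charDist] at hcoset hdensity
  have hV : 0 ≤ ∑ x : V, charDist n f x := sum_nonneg fun x _ => charDist_nonneg _
  refine ⟨L, hL, ?_⟩
  calc 2 ^ n * (∑ x : V, charDist n f (x + a)) ^ 2
      ≤ 2 ^ n * (∑ x : V, charDist n f x) ^ 2 := by
        gcongr
        exact sum_nonneg fun x _ => charDist_nonneg _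
    _ = (2 ^ n * ∑ x : V, charDist n f x) * ∑ x : V, charDist n f x := by ring
    _ ≤ Nat.card I * ∑ x : V, charDist n f x := mul_le_mul_of_nonneg_right hcard hV
    _ ≤ Nat.card V * ∑ x : I, charDist n f x := hdensity
    _ ≤ Nat.card V * ∑ x : L, charDist n f x :=
        mul_le_mul_of_nonneg_left (sum_submodule_le_of_le hIL charDist_nonneg) (by positivity)

theorem sum_weylDist_mul_charDist :
    ∑ x, weylDist n f x * (2 ^ n * charDist n f x) = 2 ^ n * tripleMass (charDist n f) := by
  rw [tripleMass, mul_sum]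
  refine sum_congr rfl fun x _ => ?_
  simp only [weylDist, conv_apply, ZModModule.sub_eq_add]
  ring

end LagrangianMass

theorem stmt_15_general {n : ℕ} {γ : ℝ} (hγ : 0 < γ) {f : (Fin n → ZMod 2) → ℂ}
    (hf : ∑ x, ‖f x‖ ^ 2 = 1)
    (hfγ : γ ≤ ∑ x, weylDist n f x * (2 ^ n * charDist n f x)) :
    ∃ L, IsLagrangian n L ∧ γ ^ 37 ≤ ∑ x : L, charDist n f x := by
  rw [sum_weylDist_mul_charDist] at hfγ
  have htriple : 0 < tripleMass (charDist n f) :=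
    pos_of_mul_pos_right (hγ.trans_le hfγ) (by positivity)
  obtain ⟨V, a, hVa⟩ := exists_pow_mul_card_le_sq_sum_coset (charDist_mem_stdSimplex hf) htriple
    (by positivity) (two_pow_mul_charDist_le_one hf)
  obtain ⟨L, hL, hVL⟩ :=
    exists_isLagrangian_two_pow_mul_sq_sum_coset_le hf (AddSubgroup.toZModSubmodule 2 V) a
  have hcard : (0 : ℝ) < Nat.card V := Nat.cast_pos.mpr Nat.card_pos
  refine ⟨L, hL, (pow_le_pow_left₀ hγ.le hfγ 37).trans (le_of_mul_le_mul_right ?_ hcard)⟩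
  exact (hVa.trans hVL).trans_eq (mul_comm _ _)

end

open scoped Classical in
/-- inverse theorem for the second moment of Weyl-operator
expectations under the Weyl distribution. -/
theorem stmt_15 :
    ∃ c : ℝ, 0 < c ∧
      ∀ n : ℕ, 1 ≤ n → ∀ γ : ℝ, γ ∈ Set.Ioc (0 : ℝ) 1 →
        ∀ f : (Fin n → ZMod 2) → ℂ, (∑ x : Fin n → ZMod 2, ‖f x‖ ^ 2 = 1) →
          (∑ x : (Fin n → ZMod 2) × (Fin n → ZMod 2),
              weylDist n f x * ((2 : ℝ) ^ n * charDist n f x)) ≥ γ →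
          ∃ L : Submodule (ZMod 2) ((Fin n → ZMod 2) × (Fin n → ZMod 2)),
            IsLagrangian n L ∧
            c * γ ^ (1089 : ℕ) ≤
              ∑ x : L, charDist n f (x : (Fin n → ZMod 2) × (Fin n → ZMod 2)) := by
  refine ⟨1, one_pos, fun n _ γ hγ f hf hfγ => ?_⟩
  obtain ⟨L, hL, hγL⟩ := stmt_15_general hγ.1 hf hfγ
  exact ⟨L, hL, by linarith [pow_le_pow_of_le_one hγ.1.le hγ.2 (show 37 ≤ 1089 by norm_num)]⟩
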